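/- arXiv:2412.11117 — 3 statements merged into one kernel-verified Lean document; each statement's English description precedes it below -/
import Mathlib

section
/- There exists a constant C > 0 such that for every Schwartz function f : ℝ³ → ℝ one has ‖f‖_{L^∞} ≤ C ‖∇f‖_{L²}^{1/2} ‖∇²f‖_{L²}^{1/2}. -/
open MeasureTheory
open scoped NNReal ENNReal

/-!
By Fourier inversion `‖f‖_∞ ≤ ‖𝓕 f‖₁`. In dimension `n + 1` the weight
`s ‖ξ‖ ^ n + s⁻¹ ‖ξ‖ ^ (n + 2)` has an integrable reciprocal whose integral does not depend on
`s > 0`, so Cauchy-Schwarz against it, optimised over `s`, bounds `‖𝓕 f‖₁ ^ 2` by the product of the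
weighted `L²` norms `‖‖ξ‖ ^ (n / 2) 𝓕 f‖₂` and `‖‖ξ‖ ^ (n / 2 + 1) 𝓕 f‖₂` (Carlson's inequality).
For `n = 2 k` Plancherel turns these into `L²` norms of derivatives of orders `k` and `k + 1`.
Vector-valued functions reduce to complex-valued ones by composing with a norming functional.
-/

section Carlson

open scoped Real

theorem le_two_mul_sqrt_mul_sqrt_of_forall_pos {x p q : ℝ} (hp : 0 ≤ p) (hq : 0 ≤ q)
    (h : ∀ s > 0, x ≤ s * p + s⁻¹ * q) : x ≤ 2 * (√p * √q) := by
  rcases le_total x 0 with hx | hx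
  · exact hx.trans (by positivity)
  have quadratic_nonneg (s : ℝ) : 0 ≤ p * (s * s) + -x * s + q := by
    rcases le_or_gt s 0 with hs | hs
    · nlinarith [mul_nonneg hp (mul_self_nonneg s), mul_nonneg hx (neg_nonneg.2 hs)]
    · have := mul_le_mul_of_nonneg_left (h s hs) hs.le
      rw [mul_add, mul_inv_cancel_left₀ hs.ne'] at this
      linarith
  have := discrim_le_zero quadratic_nonneg
  rw [discrim] at this
  refine le_of_sq_le_sq ?_ (by positivity)
  rw [mul_pow, mul_pow, Real.sq_sqrt hp, Real.sq_sqrt hq]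
  linarith

theorem sq_integral_norm_le_integral_inv_mul_integral {α F : Type*} [MeasurableSpace α]
    [NormedAddCommGroup F] {μ : Measure α} {w : α → ℝ} {g : α → F} (hw : ∀ᵐ x ∂μ, 0 < w x)
    (hwi : Integrable (fun x ↦ (w x)⁻¹) μ) (hg : Integrable (fun x ↦ w x * ‖g x‖ ^ 2) μ) :
    (∫ x, ‖g x‖ ∂μ) ^ 2 ≤ (∫ x, (w x)⁻¹ ∂μ) * ∫ x, w x * ‖g x‖ ^ 2 ∂μ := by
  have memLp_sqrt {u : α → ℝ} (hu : Integrable u μ) (hu0 : 0 ≤ᵐ[μ] u) :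
      MemLp (fun x ↦ √(u x)) (ENNReal.ofReal 2) μ := by
    rw [ENNReal.ofReal_ofNat,
      memLp_two_iff_integrable_sq (Real.continuous_sqrt.comp_aestronglyMeasurable hu.1)]
    exact hu.congr (hu0.mono fun x hx ↦ (Real.sq_sqrt hx).symm)
  have integral_sqrt_rpow {u : α → ℝ} (hu0 : 0 ≤ᵐ[μ] u) :
      (∫ x, √(u x) ^ (2 : ℝ) ∂μ) ^ (1 / 2 : ℝ) = √(∫ x, u x ∂μ) := by
    rw [Real.sqrt_eq_rpow]
    congr 1
    exact integral_congr_ae (hu0.mono fun x hx ↦ by simp [Real.sq_sqrt hx])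
  have inv_weight_nonneg : 0 ≤ᵐ[μ] fun x ↦ (w x)⁻¹ := hw.mono fun x hx ↦ (inv_pos.2 hx).le
  have weighted_nonneg : 0 ≤ᵐ[μ] fun x ↦ w x * ‖g x‖ ^ 2 := hw.mono fun x hx ↦ by
    have : 0 < w x := hx
    positivity
  have norm_eq : (fun x ↦ ‖g x‖) =ᵐ[μ] fun x ↦ √(w x)⁻¹ * √(w x * ‖g x‖ ^ 2) :=
    hw.mono fun x hx ↦ by
      simp only
      rw [← Real.sqrt_mul (inv_pos.2 hx).le, inv_mul_cancel_left₀ hx.ne',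
        Real.sqrt_sq (norm_nonneg _)]
  have holder := integral_mul_le_Lp_mul_Lq_of_nonneg Real.HolderConjugate.two_two
    (.of_forall fun x ↦ Real.sqrt_nonneg _) (.of_forall fun x ↦ Real.sqrt_nonneg _)
    (memLp_sqrt hwi inv_weight_nonneg) (memLp_sqrt hg weighted_nonneg)
  rw [← integral_congr_ae norm_eq, integral_sqrt_rpow inv_weight_nonneg,
    integral_sqrt_rpow weighted_nonneg] at holder
  calc (∫ x, ‖g x‖ ∂μ) ^ 2
      ≤ (√(∫ x, (w x)⁻¹ ∂μ) * √(∫ x, w x * ‖g x‖ ^ 2 ∂μ)) ^ 2 := by gcongr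
    _ = (∫ x, (w x)⁻¹ ∂μ) * ∫ x, w x * ‖g x‖ ^ 2 ∂μ := by
      rw [mul_pow, Real.sq_sqrt (integral_nonneg_of_ae inv_weight_nonneg),
        Real.sq_sqrt (integral_nonneg_of_ae weighted_nonneg)]

variable {E F : Type*} [NormedAddCommGroup E] [NormedSpace ℝ E] [FiniteDimensional ℝ E]
  [MeasurableSpace E] [BorelSpace E] [NormedAddCommGroup F] (μ : Measure E) [μ.IsAddHaarMeasure]
  {n : ℕ} {s : ℝ}

theorem pow_mul_inv_carlson_weight {r : ℝ} (hr : 0 < r) (hs : 0 < s) :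
    r ^ n * (s * r ^ n + s⁻¹ * r ^ (n + 2))⁻¹ = s⁻¹ * (1 + (s⁻¹ * r) ^ 2)⁻¹ := by
  have : 0 < s ^ 2 + r ^ 2 := by positivity
  rw [pow_add]
  field_simp

theorem integrable_inv_carlson_weight (hn : Module.finrank ℝ E = n + 1) (hs : 0 < s) :
    Integrable (fun x : E ↦ (s * ‖x‖ ^ n + s⁻¹ * ‖x‖ ^ (n + 2))⁻¹) μ := by
  have : Nontrivial E := Module.nontrivial_of_finrank_pos (R := ℝ) (by lia)
  rw [integrable_fun_norm_addHaar μ (f := fun r ↦ (s * r ^ n + s⁻¹ * r ^ (n + 2))⁻¹), hn,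
    Nat.add_sub_cancel]
  simp only [smul_eq_mul]
  rw [integrableOn_congr_fun (s := Set.Ioi 0)
    (fun r hr ↦ pow_mul_inv_carlson_weight (n := n) hr hs) measurableSet_Ioi]
  exact ((integrable_inv_one_add_sq.comp_mul_left' (inv_ne_zero hs.ne')).const_mul _).integrableOn

theorem integral_inv_carlson_weight (hn : Module.finrank ℝ E = n + 1) (hs : 0 < s) :
    ∫ x : E, (s * ‖x‖ ^ n + s⁻¹ * ‖x‖ ^ (n + 2))⁻¹ ∂μ =
      (n + 1) * μ.real (Metric.ball 0 1) * (π / 2) := by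
  have : Nontrivial E := Module.nontrivial_of_finrank_pos (R := ℝ) (by lia)
  have radial : ∫ r in Set.Ioi (0 : ℝ), r ^ n * (s * r ^ n + s⁻¹ * r ^ (n + 2))⁻¹ =
      π / 2 := by
    rw [setIntegral_congr_fun measurableSet_Ioi
        (fun r (hr : 0 < r) ↦ pow_mul_inv_carlson_weight hr hs), integral_const_mul,
      integral_comp_mul_left_Ioi (fun r : ℝ ↦ (1 + r ^ 2)⁻¹) 0 (inv_pos.2 hs)]
    simp [integral_Ioi_inv_one_add_sq, hs.ne']
  rw [integral_fun_norm_addHaar μ (fun r ↦ (s * r ^ n + s⁻¹ * r ^ (n + 2))⁻¹), hn,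
    Nat.add_sub_cancel]
  simp only [smul_eq_mul, radial, nsmul_eq_mul]
  push_cast
  ring

theorem sq_integral_norm_le_carlson_weight (hn : Module.finrank ℝ E = n + 1) (hs : 0 < s)
    {g : E → F} (hg : Integrable (fun x ↦ ‖x‖ ^ n * ‖g x‖ ^ 2) μ)
    (hg' : Integrable (fun x ↦ ‖x‖ ^ (n + 2) * ‖g x‖ ^ 2) μ) :
    (∫ x, ‖g x‖ ∂μ) ^ 2 ≤ (n + 1) * μ.real (Metric.ball 0 1) * (π / 2) *
      (s * ∫ x, ‖x‖ ^ n * ‖g x‖ ^ 2 ∂μ + s⁻¹ * ∫ x, ‖x‖ ^ (n + 2) * ‖g x‖ ^ 2 ∂μ) := by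
  have : Nontrivial E := Module.nontrivial_of_finrank_pos (R := ℝ) (by lia)
  have weight_pos : ∀ᵐ x ∂μ, 0 < s * ‖x‖ ^ n + s⁻¹ * ‖x‖ ^ (n + 2) := by
    filter_upwards [Measure.ae_ne μ 0] with x hx
    have := norm_pos_iff.2 hx
    positivity
  have split (x : E) : (s * ‖x‖ ^ n + s⁻¹ * ‖x‖ ^ (n + 2)) * ‖g x‖ ^ 2 =
      s * (‖x‖ ^ n * ‖g x‖ ^ 2) + s⁻¹ * (‖x‖ ^ (n + 2) * ‖g x‖ ^ 2) := by ring
  have weighted_integrable :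
      Integrable (fun x ↦ (s * ‖x‖ ^ n + s⁻¹ * ‖x‖ ^ (n + 2)) * ‖g x‖ ^ 2) μ :=
    ((hg.const_mul s).add (hg'.const_mul s⁻¹)).congr (.of_forall fun x ↦ (split x).symm)
  have cauchy_schwarz := sq_integral_norm_le_integral_inv_mul_integral weight_pos
    (integrable_inv_carlson_weight μ hn hs) weighted_integrable
  simp only [split] at cauchy_schwarz
  rwa [integral_inv_carlson_weight μ hn hs, integral_add (hg.const_mul s) (hg'.const_mul s⁻¹),
    integral_const_mul, integral_const_mul] at cauchy_schwarz

theorem carlson_inequality (hn : Module.finrank ℝ E = n + 1) {g : E → F}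
    (hg : Integrable (fun x ↦ ‖x‖ ^ n * ‖g x‖ ^ 2) μ)
    (hg' : Integrable (fun x ↦ ‖x‖ ^ (n + 2) * ‖g x‖ ^ 2) μ) :
    (∫ x, ‖g x‖ ∂μ) ^ 2 ≤ (n + 1) * μ.real (Metric.ball 0 1) * π *
      (√(∫ x, ‖x‖ ^ n * ‖g x‖ ^ 2 ∂μ) * √(∫ x, ‖x‖ ^ (n + 2) * ‖g x‖ ^ 2 ∂μ)) := by
  set A := ∫ x, ‖x‖ ^ n * ‖g x‖ ^ 2 ∂μ
  set B := ∫ x, ‖x‖ ^ (n + 2) * ‖g x‖ ^ 2 ∂μ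
  set c := (n + 1) * μ.real (Metric.ball (0 : E) 1) * (π / 2) with hc_def
  have hc : 0 ≤ c := by positivity
  have bound (s : ℝ) (hs : s > 0) : (∫ x, ‖g x‖ ∂μ) ^ 2 ≤ s * (c * A) + s⁻¹ * (c * B) :=
    (sq_integral_norm_le_carlson_weight μ hn hs hg hg').trans_eq (by ring)
  calc (∫ x, ‖g x‖ ∂μ) ^ 2
      ≤ 2 * (√(c * A) * √(c * B)) :=
        le_two_mul_sqrt_mul_sqrt_of_forall_pos (by positivity) (by positivity) bound
    _ = 2 * c * (√A * √B) := by
        rw [Real.sqrt_mul hc, Real.sqrt_mul hc, mul_mul_mul_comm, Real.mul_self_sqrt hc]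
        ring
    _ = (n + 1) * μ.real (Metric.ball 0 1) * π * (√A * √B) := by rw [hc_def]; ring

end Carlson

section Schwartz

open scoped SchwartzMap LineDeriv

variable {E F G : Type*} [NormedAddCommGroup E] [NormedSpace ℝ E] [NormedAddCommGroup F]
  [NormedSpace ℝ F] [NormedAddCommGroup G] [NormedSpace ℝ G]

theorem norm_iteratedFDeriv_lineDerivOp_le (f : 𝓢(E, F)) (v : E) (k : ℕ) (x : E) :
    ‖iteratedFDeriv ℝ k (∂_{v} f : 𝓢(E, F)) x‖ ≤ ‖v‖ * ‖iteratedFDeriv ℝ (k + 1) f x‖ := by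
  have lineDeriv_eq : (∂_{v} f : 𝓢(E, F)) = fun y ↦ fderiv ℝ f y v :=
    funext fun y ↦ SchwartzMap.lineDerivOp_apply_eq_fderiv v f y
  have fderiv_contDiff : ContDiff ℝ k (fderiv ℝ f) :=
    (f.smooth (k + 1)).fderiv_right (by norm_cast)
  rw [lineDeriv_eq, ← norm_iteratedFDeriv_fderiv]
  exact norm_iteratedFDeriv_clm_apply_const fderiv_contDiff.contDiffAt le_rfl

theorem norm_iteratedFDeriv_postcompCLM_le (L : F →L[ℝ] G) (f : 𝓢(E, F)) (k : ℕ) (x : E) :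
    ‖iteratedFDeriv ℝ k (f.postcompCLM L) x‖ ≤ ‖L‖ * ‖iteratedFDeriv ℝ k f x‖ :=
  L.norm_iteratedFDeriv_comp_left (f.smooth k).contDiffAt le_rfl

variable [MeasurableSpace E] [BorelSpace E] [SecondCountableTopology E] (μ : Measure E)
  [μ.HasTemperateGrowth]

theorem integrable_pow_mul_sq_norm_iteratedFDeriv (f : 𝓢(E, F)) (n k : ℕ) :
    Integrable (fun x ↦ ‖x‖ ^ n * ‖iteratedFDeriv ℝ k f x‖ ^ 2) μ := by
  have continuous_norm : Continuous fun x ↦ ‖iteratedFDeriv ℝ k f x‖ :=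
    ((f.smooth k).continuous_iteratedFDeriv le_rfl).norm
  refine ((f.integrable_pow_mul_iteratedFDeriv μ n k).bdd_mul
    continuous_norm.aestronglyMeasurable
    (c := SchwartzMap.seminorm ℝ 0 k f) (.of_forall fun x ↦ ?_)).congr
    (.of_forall fun x ↦ by ring)
  simpa using f.norm_iteratedFDeriv_le_seminorm ℝ k x

theorem integrable_pow_mul_sq_norm (f : 𝓢(E, F)) (n : ℕ) :
    Integrable (fun x ↦ ‖x‖ ^ n * ‖f x‖ ^ 2) μ := by
  simpa using integrable_pow_mul_sq_norm_iteratedFDeriv μ f n 0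

theorem integrable_sq_norm_iteratedFDeriv (f : 𝓢(E, F)) (k : ℕ) :
    Integrable (fun x ↦ ‖iteratedFDeriv ℝ k f x‖ ^ 2) μ := by
  simpa using integrable_pow_mul_sq_norm_iteratedFDeriv μ f 0 k

theorem eLpNorm_iteratedFDeriv_two (f : 𝓢(E, F)) (k : ℕ) :
    eLpNorm (iteratedFDeriv ℝ k f) 2 μ =
      ENNReal.ofReal √(∫ x, ‖iteratedFDeriv ℝ k f x‖ ^ 2 ∂μ) := by
  have memLp : MemLp (iteratedFDeriv ℝ k f) 2 μ :=
    (memLp_two_iff_integrable_sq_norm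
      ((f.smooth k).continuous_iteratedFDeriv le_rfl).aestronglyMeasurable).2
      (integrable_sq_norm_iteratedFDeriv μ f k)
  rw [memLp.eLpNorm_eq_integral_rpow_norm two_ne_zero ENNReal.ofNat_ne_top, Real.sqrt_eq_rpow]
  simp

theorem integral_sq_norm_iteratedFDeriv_postcompCLM_le (L : F →L[ℝ] G) (hL : ‖L‖ ≤ 1)
    (f : 𝓢(E, F)) (k : ℕ) :
    ∫ x, ‖iteratedFDeriv ℝ k (f.postcompCLM L) x‖ ^ 2 ∂μ ≤
      ∫ x, ‖iteratedFDeriv ℝ k f x‖ ^ 2 ∂μ := by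
  refine integral_mono (integrable_sq_norm_iteratedFDeriv μ _ k)
    (integrable_sq_norm_iteratedFDeriv μ f k) fun x ↦ ?_
  gcongr
  exact (norm_iteratedFDeriv_postcompCLM_le L f k x).trans
    (mul_le_of_le_one_left (norm_nonneg _) hL)

end Schwartz

section Fourier

open scoped Real SchwartzMap LineDeriv FourierTransform

variable {V F H : Type*} [NormedAddCommGroup V] [InnerProductSpace ℝ V] [FiniteDimensional ℝ V]
  [MeasurableSpace V] [BorelSpace V] [NormedAddCommGroup F] [NormedSpace ℂ F]
  [NormedAddCommGroup H] [InnerProductSpace ℂ H] [CompleteSpace H]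

theorem norm_le_integral_norm_fourier [CompleteSpace F] (f : 𝓢(V, F)) (x : V) :
    ‖f x‖ ≤ ∫ ξ, ‖𝓕 f ξ‖ := by
  have inversion : f x = 𝓕 (𝓕 f) (-x) := by
    calc f x = 𝓕⁻ (𝓕 f) x := by rw [FourierTransform.fourierInv_fourier_eq]
      _ = 𝓕 (𝓕 f) (-x) := by rw [SchwartzMap.fourierInv_apply_eq]; rfl
  rw [inversion, ← SchwartzMap.norm_toLp_one]
  exact SchwartzMap.norm_fourier_apply_le_toLp_one _ _

theorem norm_fourier_lineDerivOp (f : 𝓢(V, F)) (v ξ : V) :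
    ‖𝓕 (∂_{v} f) ξ‖ = 2 * π * ‖inner ℝ v ξ‖ * ‖𝓕 f ξ‖ := by
  have temperate : (fun η : V ↦ inner ℝ η v).HasTemperateGrowth := by fun_prop
  rw [SchwartzMap.fourier_lineDerivOp_eq, smul_apply, SchwartzMap.smulLeftCLM_apply_apply temperate,
    norm_smul, norm_smul, real_inner_comm, ← mul_assoc]
  simp [abs_of_pos Real.pi_pos]

theorem sum_sq_norm_fourier_lineDerivOp {ι : Type*} [Fintype ι] (b : OrthonormalBasis ι ℝ V)
    (f : 𝓢(V, F)) (ξ : V) :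
    ∑ i, ‖𝓕 (∂_{b i} f) ξ‖ ^ 2 = (2 * π) ^ 2 * (‖ξ‖ ^ 2 * ‖𝓕 f ξ‖ ^ 2) := by
  simp only [norm_fourier_lineDerivOp, mul_pow]
  rw [← Finset.sum_mul, ← Finset.mul_sum, b.sum_sq_norm_inner_right]
  ring

theorem integral_norm_pow_mul_sq_norm_fourier_le (f : 𝓢(V, H)) (k : ℕ) :
    ∫ ξ, ‖ξ‖ ^ (2 * k) * ‖𝓕 f ξ‖ ^ 2 ≤
      (√(Module.finrank ℝ V) / (2 * π)) ^ (2 * k) *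
        ∫ x, ‖iteratedFDeriv ℝ k f x‖ ^ 2 := by
  set ρ := √(Module.finrank ℝ V) / (2 * π) with hρ
  induction k generalizing f with
  | zero => simp [SchwartzMap.integral_norm_sq_fourier]
  | succ k ih =>
    let b := stdOrthonormalBasis ℝ V
    have directional (i) : ∫ ξ, ‖ξ‖ ^ (2 * k) * ‖𝓕 (∂_{b i} f) ξ‖ ^ 2 ≤
        ρ ^ (2 * k) * ∫ x, ‖iteratedFDeriv ℝ (k + 1) f x‖ ^ 2 := by
      refine (ih (∂_{b i} f)).trans (mul_le_mul_of_nonneg_left ?_ (by positivity))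
      refine integral_mono (integrable_sq_norm_iteratedFDeriv _ _ _)
        (integrable_sq_norm_iteratedFDeriv _ _ _) fun x ↦ ?_
      gcongr
      simpa using norm_iteratedFDeriv_lineDerivOp_le f (b i) k x
    have expand (ξ : V) : ‖ξ‖ ^ (2 * (k + 1)) * ‖𝓕 f ξ‖ ^ 2 =
        ((2 * π) ^ 2)⁻¹ * ∑ i, ‖ξ‖ ^ (2 * k) * ‖𝓕 (∂_{b i} f) ξ‖ ^ 2 := by
      rw [← Finset.mul_sum, sum_sq_norm_fourier_lineDerivOp b]
      field_simp
      ring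
    calc ∫ ξ, ‖ξ‖ ^ (2 * (k + 1)) * ‖𝓕 f ξ‖ ^ 2
        = ((2 * π) ^ 2)⁻¹ * ∑ i, ∫ ξ, ‖ξ‖ ^ (2 * k) * ‖𝓕 (∂_{b i} f) ξ‖ ^ 2 := by
          simp only [expand]
          rw [integral_const_mul,
            integral_finsetSum _ fun i _ ↦ integrable_pow_mul_sq_norm _ _ _]
      _ ≤ ((2 * π) ^ 2)⁻¹ * ∑ _i : Fin (Module.finrank ℝ V),
            ρ ^ (2 * k) * ∫ x, ‖iteratedFDeriv ℝ (k + 1) f x‖ ^ 2 := by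
          gcongr with i
          exact directional i
      _ = ρ ^ (2 * (k + 1)) * ∫ x, ‖iteratedFDeriv ℝ (k + 1) f x‖ ^ 2 := by
          have ρ_sq : ρ ^ 2 = ((2 * π) ^ 2)⁻¹ * Module.finrank ℝ V := by
            rw [hρ, div_pow, Real.sq_sqrt (Nat.cast_nonneg _), div_eq_inv_mul]
          rw [mul_add, pow_add, mul_one, ρ_sq]
          simp
          ring

variable (V) in
/-- The constant `C` which the Carlson-Plancherel argument gives in Agmon's inequality
`‖f‖_∞ ^ 2 ≤ C * ‖∇^k f‖₂ * ‖∇^(k+1) f‖₂` on a Euclidean space of dimension `d = 2 k + 1`: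
`d * vol(B) * π` comes from Carlson's inequality, and each order of differentiation costs a factor
`√d / (2 π)` since the operator norm of a derivative only controls its `d` partial derivatives one
at a time. -/
noncomputable def agmonConst : ℝ :=
  Module.finrank ℝ V * volume.real (Metric.ball (0 : V) 1) * π *
    (√(Module.finrank ℝ V) / (2 * π)) ^ Module.finrank ℝ V

theorem agmonConst_pos [Nontrivial V] : 0 < agmonConst V := by
  have finrank_pos : 0 < Module.finrank ℝ V := Module.finrank_pos
  have ball_pos : 0 < volume.real (Metric.ball (0 : V) 1) :=
    ENNReal.toReal_pos (Metric.measure_ball_pos volume 0 one_pos).ne' measure_ball_lt_top.ne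
  unfold agmonConst
  positivity

theorem agmon_inequality_inner {k : ℕ} (hV : Module.finrank ℝ V = 2 * k + 1) (f : 𝓢(V, H))
    (x : V) :
    ‖f x‖ ^ 2 ≤ agmonConst V * (√(∫ y, ‖iteratedFDeriv ℝ k f y‖ ^ 2) *
      √(∫ y, ‖iteratedFDeriv ℝ (k + 1) f y‖ ^ 2)) := by
  set ρ := √(Module.finrank ℝ V) / (2 * π) with hρ
  have sqrt_le (j : ℕ) : √(∫ ξ, ‖ξ‖ ^ (2 * j) * ‖𝓕 f ξ‖ ^ 2) ≤
      ρ ^ j * √(∫ y, ‖iteratedFDeriv ℝ j f y‖ ^ 2) := by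
    refine (Real.sqrt_le_sqrt (integral_norm_pow_mul_sq_norm_fourier_le f j)).trans_eq ?_
    rw [Real.sqrt_mul (by positivity), pow_mul', Real.sqrt_sq (by positivity)]
  calc ‖f x‖ ^ 2
      ≤ (∫ ξ, ‖𝓕 f ξ‖) ^ 2 := by
        gcongr
        exact norm_le_integral_norm_fourier f x
    _ ≤ Module.finrank ℝ V * volume.real (Metric.ball (0 : V) 1) * π *
          (√(∫ ξ, ‖ξ‖ ^ (2 * k) * ‖𝓕 f ξ‖ ^ 2) * √(∫ ξ, ‖ξ‖ ^ (2 * (k + 1)) * ‖𝓕 f ξ‖ ^ 2)) := by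
        simpa [hV, mul_add] using carlson_inequality volume hV
          (integrable_pow_mul_sq_norm volume (𝓕 f) _) (integrable_pow_mul_sq_norm volume (𝓕 f) _)
    _ ≤ Module.finrank ℝ V * volume.real (Metric.ball (0 : V) 1) * π *
          ((ρ ^ k * √(∫ y, ‖iteratedFDeriv ℝ k f y‖ ^ 2)) *
            (ρ ^ (k + 1) * √(∫ y, ‖iteratedFDeriv ℝ (k + 1) f y‖ ^ 2))) := by
        gcongr <;> exact sqrt_le _
    _ = _ := by
        rw [agmonConst, ← hρ, show ρ ^ Module.finrank ℝ V = ρ ^ k * ρ ^ (k + 1) by rw [hV]; ring]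
        ring

end Fourier

section Agmon

open scoped SchwartzMap

variable {V F : Type*} [NormedAddCommGroup V] [InnerProductSpace ℝ V] [FiniteDimensional ℝ V]
  [MeasurableSpace V] [BorelSpace V] [NormedAddCommGroup F] [NormedSpace ℝ F]

theorem exists_complex_functional_norm_apply_eq (y : F) :
    ∃ L : F →L[ℝ] ℂ, ‖L‖ ≤ 1 ∧ ‖L y‖ = ‖y‖ := by
  obtain ⟨φ, φ_norm_le, φ_apply⟩ := exists_dual_vector'' ℝ y
  refine ⟨Complex.ofRealCLM.comp φ, ?_, by simp [φ_apply]⟩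
  calc ‖Complex.ofRealCLM.comp φ‖ ≤ ‖Complex.ofRealCLM‖ * ‖φ‖ := Complex.ofRealCLM.opNorm_comp_le φ
    _ = ‖φ‖ := by rw [Complex.ofRealCLM_norm, one_mul]
    _ ≤ 1 := φ_norm_le

theorem agmon_inequality {k : ℕ} (hV : Module.finrank ℝ V = 2 * k + 1) (f : 𝓢(V, F)) (x : V) :
    ‖f x‖ ^ 2 ≤ agmonConst V * (√(∫ y, ‖iteratedFDeriv ℝ k f y‖ ^ 2) *
      √(∫ y, ‖iteratedFDeriv ℝ (k + 1) f y‖ ^ 2)) := by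
  have : Nontrivial V := Module.nontrivial_of_finrank_pos (R := ℝ) (by lia)
  have agmonConst_nonneg : 0 ≤ agmonConst V := agmonConst_pos.le
  obtain ⟨L, L_norm_le, L_apply⟩ := exists_complex_functional_norm_apply_eq (f x)
  rw [← L_apply]
  refine (agmon_inequality_inner hV (f.postcompCLM L) x).trans ?_
  gcongr _ * (√?_ * √?_) <;>
    exact integral_sq_norm_iteratedFDeriv_postcompCLM_le volume L L_norm_le f _

theorem linfty_le_sqrt_grad_mul_sqrt_grad2_general {k : ℕ}
    (hV : Module.finrank ℝ V = 2 * k + 1) :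
    ∃ C : ℝ≥0, 0 < C ∧ ∀ f : 𝓢(V, F),
      eLpNorm f ⊤ volume ≤
        (C : ℝ≥0∞) * (eLpNorm (iteratedFDeriv ℝ k f) 2 volume) ^ (1 / 2 : ℝ) *
          (eLpNorm (iteratedFDeriv ℝ (k + 1) f) 2 volume) ^ (1 / 2 : ℝ) := by
  have : Nontrivial V := Module.nontrivial_of_finrank_pos (R := ℝ) (by lia)
  have agmonConst_nonneg : 0 ≤ agmonConst V := agmonConst_pos.le
  refine ⟨(√(agmonConst V)).toNNReal, by simpa using agmonConst_pos, fun f ↦ ?_⟩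
  simp only [eLpNorm_iteratedFDeriv_two, eLpNorm_exponent_top]
  rw [ENNReal.ofReal_rpow_of_nonneg (by positivity) (by positivity),
    ENNReal.ofReal_rpow_of_nonneg (by positivity) (by positivity), ENNReal.ofNNReal_toNNReal,
    ← ENNReal.ofReal_mul (by positivity), ← ENNReal.ofReal_mul (by positivity),
    ← Real.sqrt_eq_rpow, ← Real.sqrt_eq_rpow, mul_assoc, ← Real.sqrt_mul (by positivity),
    ← Real.sqrt_mul agmonConst_nonneg]
  exact eLpNormEssSup_le_of_ae_bound (.of_forall fun x ↦
    Real.le_sqrt_of_sq_le (agmon_inequality hV f x))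

end Agmon

/-- There is `C > 0` such that every Schwartz function `f : ℝ³ → ℝ` satisfies
`‖f‖_{L^∞} ≤ C ‖∇f‖_{L²}^{1/2} ‖∇²f‖_{L²}^{1/2}`. -/
theorem linfty_le_sqrt_grad_mul_sqrt_grad2 :
    ∃ C : ℝ≥0, 0 < C ∧ ∀ f : SchwartzMap (EuclideanSpace ℝ (Fin 3)) ℝ,
      eLpNorm (⇑f) ⊤ volume ≤
        (C : ℝ≥0∞) * (eLpNorm (iteratedFDeriv ℝ 1 ⇑f) 2 volume) ^ (1 / 2 : ℝ) *
          (eLpNorm (iteratedFDeriv ℝ 2 ⇑f) 2 volume) ^ (1 / 2 : ℝ) :=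
  linfty_le_sqrt_grad_mul_sqrt_grad2_general (k := 1) (by simp)
end

section
/- There exists a constant C > 0 such that for all Schwartz functions f, g : ℝ³ → ℝ one has ‖fg‖_{L²} + ‖∇(fg)‖_{L²} ≤ C (‖f‖_{L²} + ‖∇f‖_{L²}) (‖∇g‖_{L²} + ‖∇²g‖_{L²}), i.e. ‖fg‖_{H¹} ≤ C ‖f‖_{H¹} ‖∇g‖_{H¹}. -/
open MeasureTheory
open scoped NNReal ENNReal

/-!
By Hölder, `‖f g‖₂ ≤ ‖f‖₂ ‖g‖_∞` and `‖∇(f g)‖₂ ≤ ‖f‖₆ ‖∇g‖₃ + ‖∇f‖₂ ‖g‖_∞`. The Sobolev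
inequality `‖u‖₆ ≲ ‖∇u‖₂` controls `‖f‖₆`, and, interpolating `L³` between `L²` and `L⁶`, also
`‖∇g‖₃`. Finally `‖g‖_∞ ≤ ‖ĝ‖₁`, and Cauchy–Schwarz against the weight `(|ξ| + |ξ|²)⁻¹`, which is
square integrable on `ℝ³` both at the origin and at infinity, bounds `‖ĝ‖₁` by
`‖|ξ| ĝ‖₂ + ‖|ξ|² ĝ‖₂`, hence by `‖∇g‖₂ + ‖∇²g‖₂` by Plancherel.
-/

section Lp

variable {α : Type*} [MeasurableSpace α] {μ : Measure α} {p q r : ℝ≥0∞}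

lemma eLpNorm_mul_le_mul_eLpNorm {A : Type*} [NormedRing A] [p.HolderTriple q r] {f g : α → A}
    (hf : AEStronglyMeasurable f μ) (hg : AEStronglyMeasurable g μ) :
    eLpNorm (fun x => f x * g x) r μ ≤ eLpNorm f p μ * eLpNorm g q μ := by
  simpa using eLpNorm_le_eLpNorm_mul_eLpNorm_of_nnnorm hf hg (· * ·) 1
    (ae_of_all μ fun x => by simpa using nnnorm_mul_le (f x) (g x))

variable {F : Type*} [NormedAddCommGroup F] {u : α → F} {θ η : ℝ≥0}

lemma eLpNorm_le_rpow_mul_rpow (hu : AEStronglyMeasurable u μ) (hθ : 0 < θ) (hη : 0 < η)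
    (hθη : θ + η = 1) (hr : r⁻¹ = θ * p⁻¹ + η * q⁻¹) :
    eLpNorm u r μ ≤ eLpNorm u p μ ^ (θ : ℝ) * eLpNorm u q μ ^ (η : ℝ) := by
  have hinv : ∀ {c : ℝ≥0} (s : ℝ≥0∞), 0 < c → (s / c)⁻¹ = c * s⁻¹ := fun s hc => by
    rw [ENNReal.inv_div (.inl ENNReal.coe_ne_top) (.inl (mod_cast hc.ne')), div_eq_mul_inv]
  have hmeas : ∀ c : ℝ≥0, AEStronglyMeasurable (fun x => ‖u x‖ ^ (c : ℝ)) μ := fun c =>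
    (hu.norm.aemeasurable.pow_const (c : ℝ)).aestronglyMeasurable
  have hnorm : ∀ {c : ℝ≥0} (s : ℝ≥0∞), 0 < c →
      eLpNorm (fun x => ‖u x‖ ^ (c : ℝ)) (s / c) μ = eLpNorm u s μ ^ (c : ℝ) := fun s hc => by
    rw [eLpNorm_norm_rpow u (mod_cast hc), ENNReal.ofReal_coe_nnreal,
      ENNReal.div_mul_cancel (mod_cast hc.ne') ENNReal.coe_ne_top]
  have : (p / θ).HolderTriple (q / η) r := ⟨by rw [hinv p hθ, hinv q hη, hr]⟩
  calc eLpNorm u r μ = eLpNorm (fun x => ‖u x‖ ^ (θ : ℝ) * ‖u x‖ ^ (η : ℝ)) r μ := by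
        rw [← eLpNorm_norm u]
        congr 1 with x
        rw [← Real.rpow_add_of_nonneg (norm_nonneg _) θ.coe_nonneg η.coe_nonneg, ← NNReal.coe_add,
          hθη, NNReal.coe_one, Real.rpow_one]
    _ ≤ _ := eLpNorm_mul_le_mul_eLpNorm (p := p / θ) (q := q / η) (hmeas θ) (hmeas η)
    _ = eLpNorm u p μ ^ (θ : ℝ) * eLpNorm u q μ ^ (η : ℝ) := by rw [hnorm p hθ, hnorm q hη]

lemma eLpNorm_le_eLpNorm_add_eLpNorm (hu : AEStronglyMeasurable u μ) (hθ : 0 < θ) (hη : 0 < η)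
    (hθη : θ + η = 1) (hr : r⁻¹ = θ * p⁻¹ + η * q⁻¹) :
    eLpNorm u r μ ≤ eLpNorm u p μ + eLpNorm u q μ := by
  set a := eLpNorm u p μ
  set b := eLpNorm u q μ
  calc eLpNorm u r μ ≤ a ^ (θ : ℝ) * b ^ (η : ℝ) := eLpNorm_le_rpow_mul_rpow hu hθ hη hθη hr
    _ ≤ (a + b) ^ (θ : ℝ) * (a + b) ^ (η : ℝ) := by
        gcongr
        exacts [le_self_add, le_add_self]
    _ = a + b := by
        rw [← ENNReal.rpow_add_of_nonneg _ _ θ.coe_nonneg η.coe_nonneg, ← NNReal.coe_add, hθη,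
          NNReal.coe_one, ENNReal.rpow_one]

end Lp

section GagliardoNirenbergSobolev

variable {E F : Type*} [NormedAddCommGroup E] [NormedSpace ℝ E]
  [NormedAddCommGroup F] [NormedSpace ℝ F]

lemma eLpNorm_fderiv_smul_le [MeasurableSpace E] [OpensMeasurableSpace E] {μ : Measure E}
    {χ : E → ℝ} {u : E → F} (hχ : ContDiff ℝ 1 χ) (hu : ContDiff ℝ 1 u) {ε : ℝ≥0}
    (hχ_le : ∀ x, ‖χ x‖ ≤ 1) (hχ_fderiv : ∀ x, ‖fderiv ℝ χ x‖ ≤ ε) {p : ℝ≥0∞} (hp : 1 ≤ p) :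
    eLpNorm (fderiv ℝ (fun x => χ x • u x)) p μ
      ≤ eLpNorm (fderiv ℝ u) p μ + ε * eLpNorm u p μ := by
  have hpt : ∀ x, ‖fderiv ℝ (fun x => χ x • u x) x‖ ≤ ‖fderiv ℝ u x‖ + ε * ‖u x‖ := fun x => by
    rw [fderiv_fun_smul (hχ.differentiable one_ne_zero x) (hu.differentiable one_ne_zero x)]
    refine (norm_add_le _ _).trans ?_
    rw [norm_smul, ContinuousLinearMap.norm_smulRight_apply]
    gcongr
    exacts [mul_le_of_le_one_left (norm_nonneg _) (hχ_le x), hχ_fderiv x]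
  calc eLpNorm (fderiv ℝ (fun x => χ x • u x)) p μ
      ≤ eLpNorm ((fun x => ‖fderiv ℝ u x‖) + (ε : ℝ) • fun x => ‖u x‖) p μ :=
        eLpNorm_mono_real hpt
    _ ≤ eLpNorm (fun x => ‖fderiv ℝ u x‖) p μ + eLpNorm ((ε : ℝ) • fun x => ‖u x‖) p μ :=
        eLpNorm_add_le (hu.continuous_fderiv one_ne_zero).norm.aestronglyMeasurable
          (hu.continuous.norm.const_smul (ε : ℝ)).aestronglyMeasurable hp
    _ = eLpNorm (fderiv ℝ u) p μ + ε * eLpNorm u p μ := by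
        simp [eLpNorm_const_smul, eLpNorm_norm]

variable [FiniteDimensional ℝ E]

lemma exists_contDiff_hasCompactSupport_norm_fderiv_le {ε : ℝ} (hε : 0 < ε) (R : ℝ) :
    ∃ χ : E → ℝ, ContDiff ℝ 1 χ ∧ HasCompactSupport χ ∧ (∀ x, ‖χ x‖ ≤ 1) ∧
      (∀ x, ‖fderiv ℝ χ x‖ ≤ ε) ∧ ∀ x, ‖x‖ ≤ R → χ x = 1 := by
  let φ : ContDiffBump (0 : E) := ⟨1, 2, one_pos, one_lt_two⟩
  have hφ : ContDiff ℝ 1 φ := φ.contDiff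
  obtain ⟨M, hM⟩ : ∃ M, ∀ x, ‖fderiv ℝ φ x‖ ≤ M :=
    (φ.hasCompactSupport.fderiv (𝕜 := ℝ)).exists_bound_of_continuous
      (hφ.continuous_fderiv one_ne_zero)
  have hM₀ : 0 ≤ M := (norm_nonneg _).trans (hM 0)
  obtain ⟨t, ht, htM, htR⟩ : ∃ t : ℝ, 0 < t ∧ t * M ≤ ε ∧ t * |R| ≤ 1 := by
    refine ⟨(1 + M / ε + |R|)⁻¹, by positivity, ?_, ?_⟩ <;>
      rw [inv_mul_le_iff₀ (by positivity)]
    · have : M / ε * ε = M := div_mul_cancel₀ M hε.ne'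
      nlinarith [mul_nonneg (abs_nonneg R) hε.le]
    · have : 0 ≤ M / ε := by positivity
      linarith
  refine ⟨fun x => φ (t • x), hφ.comp (contDiff_const_smul t),
    φ.hasCompactSupport.comp_homeomorph (Homeomorph.smulOfNeZero t ht.ne'),
    fun x => ?_, fun x => ?_, fun x hx => ?_⟩
  · rw [Real.norm_of_nonneg φ.nonneg]
    exact φ.le_one
  · rw [fderiv_comp_smul, norm_smul, Real.norm_of_nonneg ht.le]
    exact (mul_le_mul_of_nonneg_left (hM _) ht.le).trans htM
  · refine φ.one_of_mem_closedBall ?_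
    rw [mem_closedBall_zero_iff, norm_smul, Real.norm_of_nonneg ht.le]
    exact (mul_le_mul_of_nonneg_left (hx.trans (le_abs_self R)) ht.le).trans htR

open Filter Topology in
/- Mathlib's Gagliardo–Nirenberg–Sobolev inequality is for compactly supported functions. Cutoffs
with gradient at most `1 / (n + 1)` change `‖∇u‖_p` by at most `‖u‖_p / (n + 1)`, and the left-hand
side passes to the limit by Fatou's lemma. -/
theorem eLpNorm_le_eLpNorm_fderiv_of_memLp [FiniteDimensional ℝ F] [MeasurableSpace E]
    [BorelSpace E] {μ : Measure E} [μ.IsAddHaarMeasure] {u : E → F} {p p' : ℝ≥0}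
    (hu : ContDiff ℝ 1 u) (hup : MemLp u p μ) (hp : 1 ≤ p)
    (hE : 0 < Module.finrank ℝ E) (hp' : (p' : ℝ)⁻¹ = p⁻¹ - (Module.finrank ℝ E : ℝ)⁻¹) :
    eLpNorm u p' μ ≤ SNormLESNormFDerivOfEqConst F μ p * eLpNorm (fderiv ℝ u) p μ := by
  set K := SNormLESNormFDerivOfEqConst F μ p
  let ε : ℕ → ℝ≥0 := fun n => 1 / ((n : ℝ≥0) + 1)
  have hε : Tendsto ε atTop (𝓝 0) := tendsto_one_div_add_atTop_nhds_zero_nat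
  choose χ hχ hχ_supp hχ_le hχ_fderiv hχ_one using fun n : ℕ =>
    exists_contDiff_hasCompactSupport_norm_fderiv_le (E := E) (ε := ε n) (by positivity) n
  have hbound : ∀ n, eLpNorm (fun x => χ n x • u x) p' μ
      ≤ K * (eLpNorm (fderiv ℝ u) p μ + ε n * eLpNorm u p μ) := fun n =>
    (eLpNorm_le_eLpNorm_fderiv_of_eq μ ((hχ n).smul hu) (hχ_supp n).smul_right hp hE hp').trans <|
      by gcongr; exact eLpNorm_fderiv_smul_le (hχ n) hu (hχ_le n) (hχ_fderiv n) (mod_cast hp)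
  have hpt : ∀ x, Tendsto (fun n => χ n x • u x) atTop (𝓝 (u x)) := fun x => by
    refine tendsto_const_nhds.congr' ?_
    filter_upwards [eventually_ge_atTop ⌈‖x‖⌉₊] with n hn
    rw [hχ_one n x (Nat.ceil_le.1 hn), one_smul]
  have hlim : Tendsto (fun n => K * (eLpNorm (fderiv ℝ u) p μ + ε n * eLpNorm u p μ)) atTop
      (𝓝 (K * eLpNorm (fderiv ℝ u) p μ)) := by
    have hε_mul := ENNReal.Tendsto.mul_const (ENNReal.tendsto_coe.2 hε)
      (Or.inr hup.eLpNorm_ne_top)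
    simpa using ENNReal.Tendsto.const_mul (hε_mul.const_add (eLpNorm (fderiv ℝ u) p μ))
      (Or.inr ENNReal.coe_ne_top)
  calc eLpNorm u p' μ ≤ liminf (fun n => eLpNorm (fun x => χ n x • u x) p' μ) atTop :=
        Lp.eLpNorm_lim_le_liminf_eLpNorm
          (fun n => ((hχ n).continuous.smul hu.continuous).aestronglyMeasurable) u (ae_of_all _ hpt)
    _ ≤ liminf (fun n => K * (eLpNorm (fderiv ℝ u) p μ + ε n * eLpNorm u p μ)) atTop :=
        liminf_le_liminf (Eventually.of_forall hbound)
    _ = K * eLpNorm (fderiv ℝ u) p μ := hlim.liminf_eq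

end GagliardoNirenbergSobolev

section Fourier

open FourierTransform LineDeriv SchwartzMap Module

lemma pow_le_pow_add_pow {R : Type*} [Semiring R] [LinearOrder R] [IsStrictOrderedRing R] {r : R}
    (hr : 0 ≤ r) {a n b : ℕ} (han : a ≤ n) (hnb : n ≤ b) : r ^ n ≤ r ^ a + r ^ b := by
  rcases le_total r 1 with h | h
  · exact (pow_le_pow_of_le_one hr h han).trans (le_add_of_nonneg_right (pow_nonneg hr b))
  · exact (pow_le_pow_right₀ h hnb).trans (le_add_of_nonneg_left (pow_nonneg hr a))

lemma exists_complex_enorm_eq_and_norm_iteratedFDeriv_le {F G : Type*} [NormedAddCommGroup F]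
    [NormedSpace ℝ F] [NormedAddCommGroup G] [NormedSpace ℝ G] (g : 𝓢(F, G)) (x : F) :
    ∃ v : 𝓢(F, ℂ), ‖v x‖ₑ = ‖g x‖ₑ ∧
      ∀ n y, ‖iteratedFDeriv ℝ n v y‖ ≤ ‖iteratedFDeriv ℝ n g y‖ := by
  obtain ⟨L, hL, hLx⟩ := exists_dual_vector'' ℝ (g x)
  let T : G →L[ℝ] ℂ := Complex.ofRealCLM ∘L L
  have hT : ‖T‖ ≤ 1 := T.opNorm_le_bound zero_le_one fun y => by
    simpa [T] using L.le_of_opNorm_le hL y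
  refine ⟨g.postcompCLM T, ?_, fun n y => ?_⟩
  · simp [T, hLx, ← ofReal_norm]
  · exact (T.norm_iteratedFDeriv_comp_left (g.smooth n).contDiffAt le_rfl).trans
      (mul_le_of_le_one_left (norm_nonneg _) hT)

lemma norm_le_sum_norm_inner {𝕜 V ι : Type*} [RCLike 𝕜] [NormedAddCommGroup V]
    [InnerProductSpace 𝕜 V] [Fintype ι] (b : OrthonormalBasis ι 𝕜 V) (x : V) :
    ‖x‖ ≤ ∑ i, ‖inner 𝕜 (b i) x‖ :=
  calc ‖x‖ = ‖∑ i, inner 𝕜 (b i) x • b i‖ := by rw [b.sum_repr']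
    _ ≤ ∑ i, ‖inner 𝕜 (b i) x • b i‖ := norm_sum_le _ _
    _ = ∑ i, ‖inner 𝕜 (b i) x‖ := by simp [norm_smul]

variable {E H G : Type*} [NormedAddCommGroup E] [InnerProductSpace ℝ E] [FiniteDimensional ℝ E]
  [MeasurableSpace E] [BorelSpace E]

lemma memLp_two_inv_norm_pow_add_norm_pow {j k : ℕ} (hj : 2 * j < finrank ℝ E)
    (hk : finrank ℝ E < 2 * k) :
    MemLp (fun x : E => (‖x‖ ^ j + ‖x‖ ^ k)⁻¹) 2 volume := by
  have : Nontrivial E := nontrivial_of_finrank_pos (R := ℝ) (by omega)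
  have hmeas : AEStronglyMeasurable (fun x : E => (‖x‖ ^ j + ‖x‖ ^ k)⁻¹) volume :=
    Measurable.aestronglyMeasurable (by fun_prop)
  rw [memLp_two_iff_integrable_sq hmeas,
    integrable_fun_norm_addHaar volume (f := fun r => ((r ^ j + r ^ k)⁻¹) ^ 2)]
  refine Integrable.mono' (integrable_inv_one_add_sq.const_mul 2).integrableOn
    (Measurable.aestronglyMeasurable (by fun_prop)) ?_
  refine (ae_restrict_iff' measurableSet_Ioi).2 (ae_of_all _ fun r (hr : 0 < r) => ?_)
  have hlow := pow_le_pow_add_pow hr.le (a := 2 * j) (n := finrank ℝ E - 1) (b := 2 * k)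
    (by omega) (by omega)
  have hhigh := pow_le_pow_add_pow hr.le (a := 2 * j) (n := finrank ℝ E - 1 + 2) (b := 2 * k)
    (by omega) (by omega)
  rw [smul_eq_mul, Real.norm_of_nonneg (by positivity), inv_pow, ← div_eq_mul_inv,
    ← div_eq_mul_inv, div_le_div_iff₀ (by positivity) (by positivity)]
  calc r ^ (finrank ℝ E - 1) * (1 + r ^ 2)
      = r ^ (finrank ℝ E - 1) + r ^ (finrank ℝ E - 1 + 2) := by ring
    _ ≤ 2 * (r ^ (2 * j) + r ^ (2 * k)) := by linarith
    _ ≤ 2 * (r ^ j + r ^ k) ^ 2 := by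
        have : 0 ≤ r ^ j * r ^ k := by positivity
        rw [pow_mul', pow_mul']
        nlinarith

section NormedSpace

variable [NormedAddCommGroup H] [NormedSpace ℂ H]

lemma norm_fourier_iteratedLineDerivOp (u : 𝓢(E, H)) {n : ℕ} (m : Fin n → E) (ξ : E) :
    ‖𝓕 (∂^{m} u) ξ‖ = (2 * Real.pi) ^ n * (∏ i, ‖inner ℝ (m i) ξ‖) * ‖𝓕 u ξ‖ := by
  induction n with
  | zero => simp
  | succ n ih =>
    have hgrowth : (fun ξ : E => inner ℝ ξ (m 0)).HasTemperateGrowth := by fun_prop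
    rw [iteratedLineDerivOp_succ_left, fourier_lineDerivOp_eq, smul_apply,
      smulLeftCLM_apply_apply hgrowth, norm_smul, norm_smul, ih, Fin.prod_univ_succ]
    simp only [Complex.norm_mul, Complex.norm_ofNat, Complex.norm_real, Real.norm_eq_abs,
      abs_of_pos Real.pi_pos, Complex.norm_I, mul_one, Fin.tail, real_inner_comm]
    ring

lemma norm_pow_mul_norm_fourier_le_sum {ι : Type*} [Fintype ι] (b : OrthonormalBasis ι ℝ E)
    (u : 𝓢(E, H)) (n : ℕ) (ξ : E) :
    ‖ξ‖ ^ n * ‖𝓕 u ξ‖ ≤ ∑ m : Fin n → ι, ‖𝓕 (∂^{b ∘ m} u) ξ‖ := by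
  have hpi : 1 ≤ (2 * Real.pi) ^ n := one_le_pow₀ (by linarith [Real.pi_gt_three])
  calc ‖ξ‖ ^ n * ‖𝓕 u ξ‖ ≤ (∑ i, ‖inner ℝ (b i) ξ‖) ^ n * ‖𝓕 u ξ‖ := by
        gcongr; exact norm_le_sum_norm_inner b ξ
    _ = ∑ m : Fin n → ι, (∏ i, ‖inner ℝ (b (m i)) ξ‖) * ‖𝓕 u ξ‖ := by
        rw [Fintype.sum_pow, Finset.sum_mul]
    _ ≤ ∑ m : Fin n → ι, ‖𝓕 (∂^{b ∘ m} u) ξ‖ := by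
        gcongr with m
        rw [norm_fourier_iteratedLineDerivOp, mul_assoc]
        exact le_mul_of_one_le_left (by positivity) hpi

lemma enorm_le_eLpNorm_fourier_one [CompleteSpace H] (u : 𝓢(E, H)) (x : E) :
    ‖u x‖ₑ ≤ eLpNorm (fun ξ => 𝓕 u ξ) 1 volume :=
  calc ‖u x‖ₑ = ‖(𝓕⁻ (𝓕 u : 𝓢(E, H)) : 𝓢(E, H)) x‖ₑ := by rw [fourierInv_fourier_eq]
    _ ≤ eLpNorm (fun ξ => 𝓕 u ξ) 1 volume := by
        rw [fourierInv_coe, Real.fourierInv_eq, eLpNorm_one_eq_lintegral_enorm]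
        exact (enorm_integral_le_lintegral_enorm _).trans_eq (by simp [← ofReal_norm])

end NormedSpace

section Plancherel

variable [NormedAddCommGroup H] [InnerProductSpace ℂ H] [CompleteSpace H]

lemma eLpNorm_fourier_two (u : 𝓢(E, H)) :
    eLpNorm (fun ξ => 𝓕 u ξ) 2 volume = eLpNorm u 2 volume := by
  have hnorm := norm_fourier_toL2_eq u
  rw [norm_toLp, norm_toLp] at hnorm
  exact (ENNReal.toReal_eq_toReal_iff' ((𝓕 u : 𝓢(E, H)).memLp 2 volume).eLpNorm_ne_top
    (u.memLp 2 volume).eLpNorm_ne_top).1 hnorm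

lemma eLpNorm_norm_pow_mul_norm_fourier_le (u : 𝓢(E, H)) (n : ℕ) :
    eLpNorm (fun ξ => ‖ξ‖ ^ n * ‖𝓕 u ξ‖) 2 volume
      ≤ (finrank ℝ E : ℝ≥0∞) ^ n * eLpNorm (iteratedFDeriv ℝ n u) 2 volume := by
  let b := stdOrthonormalBasis ℝ E
  have hderiv : ∀ m : Fin n → Fin (finrank ℝ E), eLpNorm (fun ξ => ‖𝓕 (∂^{b ∘ m} u) ξ‖) 2 volume
      ≤ eLpNorm (iteratedFDeriv ℝ n u) 2 volume := fun m => by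
    rw [eLpNorm_norm, eLpNorm_fourier_two]
    refine eLpNorm_mono fun x => ?_
    rw [iteratedLineDerivOp_eq_iteratedFDeriv]
    simpa using (iteratedFDeriv ℝ n u x).le_opNorm (b ∘ m)
  calc eLpNorm (fun ξ => ‖ξ‖ ^ n * ‖𝓕 u ξ‖) 2 volume
      ≤ eLpNorm (∑ m : Fin n → Fin (finrank ℝ E), fun ξ => ‖𝓕 (∂^{b ∘ m} u) ξ‖) 2 volume := by
        refine eLpNorm_mono_real fun ξ => ?_
        rw [Real.norm_of_nonneg (by positivity), Finset.sum_apply]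
        exact norm_pow_mul_norm_fourier_le_sum b u n ξ
    _ ≤ ∑ m : Fin n → Fin (finrank ℝ E), eLpNorm (fun ξ => ‖𝓕 (∂^{b ∘ m} u) ξ‖) 2 volume :=
        eLpNorm_sum_le (fun m _ => (𝓕 (∂^{b ∘ m} u) :
          𝓢(E, H)).continuous.norm.aestronglyMeasurable) one_le_two
    _ ≤ ∑ _m : Fin n → Fin (finrank ℝ E), eLpNorm (iteratedFDeriv ℝ n u) 2 volume :=
        Finset.sum_le_sum fun m _ => hderiv m
    _ = (finrank ℝ E : ℝ≥0∞) ^ n * eLpNorm (iteratedFDeriv ℝ n u) 2 volume := by simp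

lemma eLpNorm_fourier_one_le [Nontrivial E] (j k : ℕ) (u : 𝓢(E, H)) :
    eLpNorm (fun ξ => 𝓕 u ξ) 1 volume ≤ eLpNorm (fun ξ : E => (‖ξ‖ ^ j + ‖ξ‖ ^ k)⁻¹) 2 volume *
      (finrank ℝ E ^ j * eLpNorm (iteratedFDeriv ℝ j u) 2 volume
        + finrank ℝ E ^ k * eLpNorm (iteratedFDeriv ℝ k u) 2 volume) := by
  let w : E → ℝ := fun ξ => (‖ξ‖ ^ j + ‖ξ‖ ^ k)⁻¹
  let v : ℕ → E → ℝ := fun n ξ => ‖ξ‖ ^ n * ‖𝓕 u ξ‖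
  have hw : AEStronglyMeasurable w volume := Measurable.aestronglyMeasurable (by fun_prop)
  have hv : ∀ n, AEStronglyMeasurable (v n) volume := fun n =>
    ((continuous_norm.pow n).mul (𝓕 u : 𝓢(E, H)).continuous.norm).aestronglyMeasurable
  calc eLpNorm (fun ξ => 𝓕 u ξ) 1 volume = eLpNorm (w • (v j + v k)) 1 volume := by
        refine eLpNorm_congr_norm_ae ?_
        filter_upwards [Measure.ae_ne volume (0 : E)] with ξ hξ
        have : 0 < ‖ξ‖ := norm_pos_iff.2 hξ
        simp only [w, v, Pi.smul_apply', Pi.add_apply, smul_eq_mul, ← add_mul]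
        rw [inv_mul_cancel_left₀ (by positivity), norm_norm]
    _ ≤ eLpNorm w 2 volume * eLpNorm (v j + v k) 2 volume :=
        eLpNorm_smul_le_mul_eLpNorm ((hv j).add (hv k)) hw
    _ ≤ eLpNorm w 2 volume * (eLpNorm (v j) 2 volume + eLpNorm (v k) 2 volume) := by
        gcongr; exact eLpNorm_add_le (hv j) (hv k) one_le_two
    _ ≤ _ := by gcongr <;> exact eLpNorm_norm_pow_mul_norm_fourier_le u _

end Plancherel

theorem exists_eLpNorm_top_le_eLpNorm_iteratedFDeriv [NormedAddCommGroup G] [NormedSpace ℝ G]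
    {j k : ℕ} (hj : 2 * j < finrank ℝ E) (hk : finrank ℝ E < 2 * k) :
    ∃ K : ℝ≥0, ∀ g : 𝓢(E, G), eLpNorm g ∞ volume ≤
      K * (eLpNorm (iteratedFDeriv ℝ j g) 2 volume + eLpNorm (iteratedFDeriv ℝ k g) 2 volume) := by
  have : Nontrivial E := nontrivial_of_finrank_pos (R := ℝ) (by omega)
  let d : ℝ≥0∞ := finrank ℝ E
  let W := eLpNorm (fun ξ : E => (‖ξ‖ ^ j + ‖ξ‖ ^ k)⁻¹) 2 volume
  have hK : W * (d ^ j + d ^ k) ≠ ∞ :=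
    ENNReal.mul_ne_top (memLp_two_inv_norm_pow_add_norm_pow hj hk).eLpNorm_ne_top (by finiteness)
  refine ⟨(W * (d ^ j + d ^ k)).toNNReal, fun g => ?_⟩
  rw [ENNReal.coe_toNNReal hK, eLpNorm_exponent_top]
  refine essSup_le_of_ae_le _ (ae_of_all _ fun x => ?_)
  obtain ⟨v, hvx, hvg⟩ := exists_complex_enorm_eq_and_norm_iteratedFDeriv_le g x
  let A : ℕ → ℝ≥0∞ := fun n => eLpNorm (iteratedFDeriv ℝ n g) 2 volume
  calc ‖g x‖ₑ = ‖v x‖ₑ := hvx.symm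
    _ ≤ eLpNorm (fun ξ => 𝓕 v ξ) 1 volume := enorm_le_eLpNorm_fourier_one v x
    _ ≤ W * (d ^ j * eLpNorm (iteratedFDeriv ℝ j v) 2 volume
          + d ^ k * eLpNorm (iteratedFDeriv ℝ k v) 2 volume) :=
        eLpNorm_fourier_one_le j k v
    _ ≤ W * (d ^ j * A j + d ^ k * A k) := by gcongr <;> exact eLpNorm_mono (hvg _)
    _ ≤ W * ((d ^ j + d ^ k) * A j + (d ^ j + d ^ k) * A k) := by
        gcongr
        exacts [le_self_add, le_add_self]
    _ = W * (d ^ j + d ^ k) * (A j + A k) := by ring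

end Fourier

lemma eLpNorm_iteratedFDeriv_one_mul_le {E A : Type*} [NormedAddCommGroup E] [NormedSpace ℝ E]
    [MeasurableSpace E] [OpensMeasurableSpace E] [NormedRing A] [NormedAlgebra ℝ A]
    {μ : Measure E} {f g : E → A} (hf : ContDiff ℝ 1 f) (hg : ContDiff ℝ 1 g)
    {p q r : ℝ≥0∞} [ENNReal.HolderTriple p q r] (hr : 1 ≤ r) :
    eLpNorm (iteratedFDeriv ℝ 1 fun x => f x * g x) r μ
      ≤ eLpNorm f p μ * eLpNorm (iteratedFDeriv ℝ 1 g) q μ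
        + eLpNorm (iteratedFDeriv ℝ 1 f) r μ * eLpNorm g ∞ μ := by
  have hf' := hf.continuous_iteratedFDeriv le_rfl
  have hg' := hg.continuous_iteratedFDeriv le_rfl
  let u : E → ℝ := fun x => ‖f x‖ * ‖iteratedFDeriv ℝ 1 g x‖
  let v : E → ℝ := fun x => ‖iteratedFDeriv ℝ 1 f x‖ * ‖g x‖
  have hpt : ∀ x, ‖iteratedFDeriv ℝ 1 (fun x => f x * g x) x‖ ≤ u x + v x := fun x => by
    simpa [u, v, Finset.sum_range_succ] using norm_iteratedFDeriv_mul_le hf hg x le_rfl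
  calc eLpNorm (iteratedFDeriv ℝ 1 fun x => f x * g x) r μ
      ≤ eLpNorm (u + v) r μ := eLpNorm_mono_real hpt
    _ ≤ eLpNorm u r μ + eLpNorm v r μ :=
        eLpNorm_add_le (hf.continuous.norm.mul hg'.norm).aestronglyMeasurable
          (hf'.norm.mul hg.continuous.norm).aestronglyMeasurable hr
    _ ≤ _ := by
        gcongr
        · simpa only [eLpNorm_norm] using eLpNorm_mul_le_mul_eLpNorm (p := p) (q := q)
            hf.continuous.norm.aestronglyMeasurable hg'.norm.aestronglyMeasurable
        · simpa only [eLpNorm_norm] using eLpNorm_mul_le_mul_eLpNorm (p := r) (q := ∞)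
            hf'.norm.aestronglyMeasurable hg.continuous.norm.aestronglyMeasurable

section ThreeDimensional

open Module

variable {E F : Type*} [NormedAddCommGroup E] [NormedSpace ℝ E] [MeasurableSpace E]
  [NormedAddCommGroup F] [NormedSpace ℝ F]

lemma eLpNorm_iteratedFDeriv_one (u : E → F) (p : ℝ≥0∞) (μ : Measure E) :
    eLpNorm (iteratedFDeriv ℝ 1 u) p μ = eLpNorm (fderiv ℝ u) p μ :=
  eLpNorm_congr_norm_ae (ae_of_all μ fun _ => norm_iteratedFDeriv_one u)

lemma eLpNorm_iteratedFDeriv_fderiv (u : E → F) (n : ℕ) (p : ℝ≥0∞) (μ : Measure E) :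
    eLpNorm (iteratedFDeriv ℝ n (fderiv ℝ u)) p μ = eLpNorm (iteratedFDeriv ℝ (n + 1) u) p μ :=
  eLpNorm_congr_norm_ae (ae_of_all μ fun _ => norm_iteratedFDeriv_fderiv)

variable [BorelSpace E] [FiniteDimensional ℝ E]

theorem exists_eLpNorm_six_le_eLpNorm_iteratedFDeriv_one (F : Type*) [NormedAddCommGroup F]
    [NormedSpace ℝ F] [FiniteDimensional ℝ F] (hE : finrank ℝ E = 3) (μ : Measure E)
    [μ.IsAddHaarMeasure] :
    ∃ K : ℝ≥0, ∀ u : E → F, ContDiff ℝ 1 u → MemLp u 2 μ →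
      eLpNorm u 6 μ ≤ K * eLpNorm (iteratedFDeriv ℝ 1 u) 2 μ := by
  refine ⟨SNormLESNormFDerivOfEqConst F μ 2, fun u hu hu₂ => ?_⟩
  rw [eLpNorm_iteratedFDeriv_one]
  exact eLpNorm_le_eLpNorm_fderiv_of_memLp (p := 2) (p' := 6) hu hu₂ one_le_two (by omega)
    (by norm_num [hE])

theorem exists_eLpNorm_three_le_eLpNorm_add_eLpNorm_iteratedFDeriv_one (F : Type*)
    [NormedAddCommGroup F] [NormedSpace ℝ F] [FiniteDimensional ℝ F] (hE : finrank ℝ E = 3)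
    (μ : Measure E) [μ.IsAddHaarMeasure] :
    ∃ K : ℝ≥0, ∀ u : E → F, ContDiff ℝ 1 u → MemLp u 2 μ →
      eLpNorm u 3 μ ≤ K * (eLpNorm u 2 μ + eLpNorm (iteratedFDeriv ℝ 1 u) 2 μ) := by
  obtain ⟨K, hK⟩ := exists_eLpNorm_six_le_eLpNorm_iteratedFDeriv_one F hE μ
  refine ⟨1 + K, fun u hu hu₂ => ?_⟩
  have hexp : (3 : ℝ≥0∞)⁻¹ = (1 / 2 : ℝ≥0) * 2⁻¹ + (1 / 2 : ℝ≥0) * 6⁻¹ := by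
    rw [← ENNReal.toReal_eq_toReal_iff' (by finiteness) (by finiteness),
      ENNReal.toReal_add (by finiteness) (by finiteness)]
    norm_num [ENNReal.toReal_inv]
  set a := eLpNorm u 2 μ
  set b := eLpNorm (iteratedFDeriv ℝ 1 u) 2 μ
  calc eLpNorm u 3 μ ≤ a + eLpNorm u 6 μ :=
        eLpNorm_le_eLpNorm_add_eLpNorm hu₂.1 (by norm_num) (by norm_num) (by norm_num) hexp
    _ ≤ a + K * b := by gcongr; exact hK u hu hu₂
    _ ≤ (a + K * b) + (b + K * a) := le_self_add
    _ = (1 + K : ℝ≥0) * (a + b) := by push_cast; ring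

end ThreeDimensional

theorem h1_norm_product_le_general {E A : Type*} [NormedAddCommGroup E] [InnerProductSpace ℝ E]
    [FiniteDimensional ℝ E] [MeasurableSpace E] [BorelSpace E] [NormedRing A] [NormedAlgebra ℝ A]
    [FiniteDimensional ℝ A] (hE : Module.finrank ℝ E = 3) :
    ∃ C : ℝ≥0, 0 < C ∧ ∀ (f : E → A) (g : SchwartzMap E A), ContDiff ℝ 1 f → MemLp f 2 volume →
      eLpNorm (fun x => f x * g x) 2 volume
        + eLpNorm (iteratedFDeriv ℝ 1 fun x => f x * g x) 2 volume ≤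
      (C : ℝ≥0∞) * (eLpNorm f 2 volume + eLpNorm (iteratedFDeriv ℝ 1 f) 2 volume)
        * (eLpNorm (iteratedFDeriv ℝ 1 g) 2 volume
            + eLpNorm (iteratedFDeriv ℝ 2 g) 2 volume) := by
  obtain ⟨K, hK⟩ := exists_eLpNorm_top_le_eLpNorm_iteratedFDeriv (E := E) (G := A) (j := 1) (k := 2)
    (by omega) (by omega)
  obtain ⟨S, hS⟩ := exists_eLpNorm_six_le_eLpNorm_iteratedFDeriv_one A hE volume
  obtain ⟨T, hT⟩ :=
    exists_eLpNorm_three_le_eLpNorm_add_eLpNorm_iteratedFDeriv_one (E →L[ℝ] A) hE volume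
  refine ⟨K + S * T + 1, by positivity, fun f g hf hf₂ => ?_⟩
  let g' := SchwartzMap.fderivCLM ℝ E A g
  have hg' := hT (fderiv ℝ g) (g'.smooth 1) (g'.memLp 2 volume)
  rw [eLpNorm_iteratedFDeriv_fderiv, ← eLpNorm_iteratedFDeriv_one,
    ← eLpNorm_iteratedFDeriv_one] at hg'
  have : ENNReal.HolderTriple 6 3 2 := ⟨by
    rw [← ENNReal.toReal_eq_toReal_iff' (by finiteness) (by finiteness),
      ENNReal.toReal_add (by finiteness) (by finiteness)]
    norm_num [ENNReal.toReal_inv]⟩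
  have hfg : eLpNorm (fun x => f x * g x) 2 volume ≤ eLpNorm f 2 volume * eLpNorm g ∞ volume :=
    eLpNorm_mul_le_mul_eLpNorm hf₂.1 g.continuous.aestronglyMeasurable
  have hfg' : eLpNorm (iteratedFDeriv ℝ 1 fun x => f x * g x) 2 volume
      ≤ eLpNorm f 6 volume * eLpNorm (iteratedFDeriv ℝ 1 g) 3 volume
        + eLpNorm (iteratedFDeriv ℝ 1 f) 2 volume * eLpNorm g ∞ volume :=
    eLpNorm_iteratedFDeriv_one_mul_le (p := 6) (q := 3) hf (g.smooth 1) one_le_two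
  set a := eLpNorm f 2 volume
  set b := eLpNorm (iteratedFDeriv ℝ 1 f) 2 volume
  set B := eLpNorm (iteratedFDeriv ℝ 1 g) 2 volume + eLpNorm (iteratedFDeriv ℝ 2 g) 2 volume
  calc _ ≤ a * (K * B) + ((S * b) * (T * B) + b * (K * B)) := by
        refine (add_le_add hfg hfg').trans ?_
        gcongr
        exacts [hK g, hS f hf hf₂, hK g]
    _ ≤ (a * (K * B) + ((S * b) * (T * B) + b * (K * B))) + (S * T * a * B + (a + b) * B) :=
        le_self_add
    _ = (K + S * T + 1 : ℝ≥0) * (a + b) * B := by push_cast; ring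

/-- There is `C > 0` such that all Schwartz `f, g : ℝ³ → ℝ` satisfy
`‖fg‖_{H¹} ≤ C ‖f‖_{H¹} ‖∇g‖_{H¹}`. -/
theorem h1_norm_product_le :
    ∃ C : ℝ≥0, 0 < C ∧ ∀ f g : SchwartzMap (EuclideanSpace ℝ (Fin 3)) ℝ,
      eLpNorm (fun x => f x * g x) 2 volume
        + eLpNorm (iteratedFDeriv ℝ 1 fun x => f x * g x) 2 volume ≤
      (C : ℝ≥0∞) * (eLpNorm (⇑f) 2 volume + eLpNorm (iteratedFDeriv ℝ 1 ⇑f) 2 volume)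
        * (eLpNorm (iteratedFDeriv ℝ 1 ⇑g) 2 volume
            + eLpNorm (iteratedFDeriv ℝ 2 ⇑g) 2 volume) := by
  obtain ⟨C, hC, h⟩ := h1_norm_product_le_general (A := ℝ) finrank_euclideanSpace_fin
  exact ⟨C, hC, fun f g => h f g (f.smooth 1) (f.memLp 2)⟩
end

section
/- Let k ≥ 0 be an integer and let r, r₁, r₂, r₃, r₄ be exponents with 1 < r, r₂, r₄ < ∞, 1 ≤ r₁, r₃ ≤ ∞, and 1/r₁ + 1/r₂ = 1/r₃ + 1/r₄ = 1/r. Then there exists a constant C > 0 such that for all Schwartz functions g, h : ℝ³ → ℝ one has ‖∇^k(gh)‖_{L^r} ≤ C ‖g‖_{L^{r₁}} ‖∇^k h‖_{L^{r₂}} + C ‖h‖_{L^{r₃}} ‖∇^k g‖_{L^{r₄}}. -/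
open MeasureTheory
open scoped NNReal ENNReal

/-!
By the product rule and Hölder's inequality, `‖∇ᵏ(gh)‖_r` is bounded by a sum over `m + n = k` of
the products `x_n = ‖∇ⁿg‖ ‖∇ᵐh‖`, whose exponents are chosen so that their inverses are affine in
`n` and match the two terms on the right-hand side at `n = 0` and `n = k`. It then suffices that
`x_(n+1)² ≤ C x_n x_(n+2)`, since a sequence which is log-convex up to constants is bounded by its
endpoint values.

Each factor satisfies this by the interpolation inequality `‖∇F‖_p² ≤ C ‖F‖_a ‖∇²F‖_b` for
`1/a + 1/b = 2/p`. It follows from the pointwise bound `|∇F|² ≤ C M(|F|) M(|∇²F|)`, where `M` is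
the Hardy-Littlewood maximal function: Taylor's formula, averaged over a ball of radius `ρ`, gives
`|∇F| ≤ C (ρ⁻¹ M(|F|) + ρ M(|∇²F|))`, and one optimizes over `ρ`. The maximal function is bounded
on `L^a` for every `a > 1`, so Hölder's inequality finishes the argument.
-/

open Filter Metric Set

section LayerCake

variable {X : Type*} [MeasurableSpace X] {μ : Measure X} {f g : X → ℝ≥0∞} {q : ℝ}

theorem rpow_eq_mul_lintegral_of_ne_top (hq : 0 < q) {a : ℝ≥0∞} (ha : a ≠ ⊤) :
    a ^ q = ENNReal.ofReal q * ∫⁻ t in Ioi (0 : ℝ),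
      {t | ENNReal.ofReal t < a}.indicator (fun t ↦ ENNReal.ofReal (t ^ (q - 1))) t := by
  have h := lintegral_rpow_eq_lintegral_meas_lt_mul (Measure.dirac ()) (f := fun _ ↦ a.toReal)
    (ae_of_all _ fun _ ↦ ENNReal.toReal_nonneg) aemeasurable_const hq
  rw [lintegral_dirac, ← ENNReal.ofReal_rpow_of_nonneg ENNReal.toReal_nonneg hq.le,
    ENNReal.ofReal_toReal ha] at h
  rw [h]
  congr 1
  refine setLIntegral_congr_fun measurableSet_Ioi fun t ht ↦ ?_
  simp [indicator, ENNReal.ofReal_lt_iff_lt_toReal ht.le ha]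

theorem rpow_eq_mul_lintegral (hq : 0 < q) (a : ℝ≥0∞) :
    a ^ q = ENNReal.ofReal q * ∫⁻ t in Ioi (0 : ℝ),
      {t | ENNReal.ofReal t < a}.indicator (fun t ↦ ENNReal.ofReal (t ^ (q - 1))) t := by
  rcases eq_or_ne a ⊤ with rfl | ha
  · rw [ENNReal.top_rpow_of_pos hq, eq_comm]
    refine ENNReal.eq_top_of_forall_nnreal_le fun c ↦ ?_
    calc (c : ℝ≥0∞) = ((c : ℝ≥0∞) ^ q⁻¹) ^ q := (ENNReal.rpow_inv_rpow hq.ne' _).symm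
      _ ≤ _ := by
        rw [rpow_eq_mul_lintegral_of_ne_top hq
          (ENNReal.rpow_ne_top_of_nonneg (inv_nonneg.2 hq.le) ENNReal.coe_ne_top)]
        gcongr
        exact le_top
  · exact rpow_eq_mul_lintegral_of_ne_top hq ha

theorem lintegral_rpow_mul_eq_lintegral_setLIntegral_lt [SFinite μ] (hf : Measurable f)
    (hg : Measurable g) (hq : 0 < q) :
    ∫⁻ x, f x ^ q * g x ∂μ = ENNReal.ofReal q * ∫⁻ t in Ioi (0 : ℝ),
      ENNReal.ofReal (t ^ (q - 1)) * ∫⁻ x in {x | ENNReal.ofReal t < f x}, g x ∂μ := by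
  let φ (x : X) (t : ℝ) : ℝ≥0∞ :=
    {z : X × ℝ | ENNReal.ofReal z.2 < f z.1}.indicator
      (fun z ↦ ENNReal.ofReal (z.2 ^ (q - 1)) * g z.1) (x, t)
  have hφ : Measurable (Function.uncurry φ) :=
    (by fun_prop : Measurable fun z : X × ℝ ↦ ENNReal.ofReal (z.2 ^ (q - 1)) * g z.1).indicator
      (measurableSet_lt (by fun_prop) (by fun_prop))
  have hx (x : X) : f x ^ q * g x = ENNReal.ofReal q * ∫⁻ t in Ioi (0 : ℝ), φ x t := by
    rw [rpow_eq_mul_lintegral hq, mul_assoc, ← lintegral_mul_const]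
    · simp only [φ, indicator, ite_mul, zero_mul, mem_ofPred_eq]
    · exact (by fun_prop : Measurable fun t : ℝ ↦ ENNReal.ofReal (t ^ (q - 1))).indicator
        (measurableSet_lt (by fun_prop) measurable_const)
  have ht (t : ℝ) : ∫⁻ x, φ x t ∂μ =
      ENNReal.ofReal (t ^ (q - 1)) * ∫⁻ x in {x | ENNReal.ofReal t < f x}, g x ∂μ := by
    rw [← lintegral_const_mul _ hg, ← lintegral_indicator (measurableSet_lt measurable_const hf)]
    rfl
  simp only [hx, ← ht]
  rw [lintegral_const_mul _ (Measurable.lintegral_prod_right hφ),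
    lintegral_lintegral_swap hφ.aemeasurable]

end LayerCake

section MaximalFunction

variable {X : Type*} [PseudoMetricSpace X] [MeasurableSpace X] {μ : Measure X}
  {u w : X → ℝ≥0∞} {x : X} {l : ℝ≥0∞} {A : ℝ≥0}

/-- The uncentred Hardy–Littlewood maximal function of `u` with respect to `μ`: the supremum of
the averages of `u` over all balls containing the given point. -/
noncomputable def maximalFunction (μ : Measure X) (u : X → ℝ≥0∞) (x : X) : ℝ≥0∞ :=
  ⨆ (c : X) (ρ : ℝ) (_ : x ∈ ball c ρ), ⨍⁻ y in ball c ρ, u y ∂μ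

theorem lt_maximalFunction_iff :
    l < maximalFunction μ u x ↔ ∃ c ρ, x ∈ ball c ρ ∧ l < ⨍⁻ y in ball c ρ, u y ∂μ := by
  simp only [maximalFunction, lt_iSup_iff, exists_prop]

theorem setLAverage_ball_le_maximalFunction {c : X} {ρ : ℝ} (hx : x ∈ ball c ρ) :
    ⨍⁻ y in ball c ρ, u y ∂μ ≤ maximalFunction μ u x :=
  le_iSup₂_of_le c ρ (le_iSup_of_le hx le_rfl)

theorem lowerSemicontinuous_maximalFunction : LowerSemicontinuous (maximalFunction μ u) := by
  refine lowerSemicontinuous_iff_isOpen_preimage.2 fun l ↦ isOpen_iff_mem_nhds.2 fun x hx ↦ ?_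
  obtain ⟨c, ρ, hxc, hl⟩ := lt_maximalFunction_iff.1 hx
  filter_upwards [isOpen_ball.mem_nhds hxc] with y hy
  exact lt_maximalFunction_iff.2 ⟨c, ρ, hy, hl⟩

theorem measurable_maximalFunction [OpensMeasurableSpace X] : Measurable (maximalFunction μ u) :=
  lowerSemicontinuous_maximalFunction.measurable

theorem maximalFunction_le_essSup : maximalFunction μ u x ≤ essSup u μ :=
  iSup₂_le fun _ _ ↦ iSup_le fun _ ↦ setLAverage_le_essSup _ _

theorem maximalFunction_le_add_of_le_add (h : ∀ y, u y ≤ w y + l) :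
    maximalFunction μ u x ≤ maximalFunction μ w x + l := by
  refine iSup₂_le fun c ρ ↦ iSup_le fun hx ↦ ?_
  calc ⨍⁻ y in ball c ρ, u y ∂μ
      ≤ ⨍⁻ y in ball c ρ, (w y + l) ∂μ := laverage_mono_ae (ae_of_all _ h)
    _ = ⨍⁻ y in ball c ρ, w y ∂μ + ⨍⁻ _ in ball c ρ, l ∂μ := by
        simp only [setLAverage_eq, lintegral_add_right _ measurable_const, ENNReal.add_div]
    _ ≤ maximalFunction μ w x + l := by
        gcongr
        · exact setLAverage_ball_le_maximalFunction hx
        · exact (setLAverage_le_essSup _ _).trans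
            (essSup_le_of_ae_le l (ae_of_all _ fun _ ↦ le_rfl))

variable [OpensMeasurableSpace X] [TopologicalSpace.SeparableSpace X]

theorem mul_measure_biUnion_ball_le (hμ : ∀ c ρ, μ (ball c (4 * ρ)) ≤ A * μ (ball c ρ))
    {t : Set (X × ℝ)} {R : ℝ} (ht : ∀ b ∈ t, (ball b.1 b.2).Nonempty ∧ b.2 ≤ R)
    (hl : ∀ b ∈ t, l * μ (ball b.1 b.2) ≤ ∫⁻ y in ball b.1 b.2, u y ∂μ) :
    l * μ (⋃ b ∈ t, ball b.1 b.2) ≤ A * ∫⁻ y, u y ∂μ := by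
  obtain ⟨s, hst, hdisj, hcover⟩ := Vitali.exists_disjoint_subfamily_covering_enlargement_ball
    t Prod.fst Prod.snd R (fun b hb ↦ (ht b hb).2) 4 (by norm_num)
  have hs : s.Countable :=
    hdisj.countable_of_isOpen (fun _ _ ↦ isOpen_ball) fun b hb ↦ (ht b (hst hb)).1
  have hsub : ⋃ b ∈ t, ball b.1 b.2 ⊆ ⋃ b ∈ s, ball b.1 (4 * b.2) := by
    refine iUnion₂_subset fun a ha ↦ ?_
    obtain ⟨b, hb, hab⟩ := hcover a ha
    exact hab.trans (subset_biUnion_of_mem (u := fun b : X × ℝ ↦ ball b.1 (4 * b.2)) hb)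
  calc l * μ (⋃ b ∈ t, ball b.1 b.2)
      ≤ l * ∑' b : s, μ (ball b.1.1 (4 * b.1.2)) := by
        gcongr
        exact (measure_mono hsub).trans (measure_biUnion_le μ hs _)
    _ ≤ l * ∑' b : s, A * μ (ball b.1.1 b.1.2) := by
        gcongr
        exact hμ _ _
    _ = A * ∑' b : s, l * μ (ball b.1.1 b.1.2) := by
        simp only [ENNReal.tsum_mul_left, mul_left_comm]
    _ ≤ A * ∑' b : s, ∫⁻ y in ball b.1.1 b.1.2, u y ∂μ := by
        gcongr with b
        exact hl b (hst b.2)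
    _ = A * ∫⁻ y in ⋃ b ∈ s, ball b.1 b.2, u y ∂μ := by
        rw [lintegral_biUnion hs (fun _ _ ↦ measurableSet_ball) hdisj]
    _ ≤ A * ∫⁻ y, u y ∂μ := by
        gcongr
        exact Measure.restrict_le_self

theorem mul_measure_lt_maximalFunction_le
    (hμ : ∀ c ρ, μ (ball c (4 * ρ)) ≤ A * μ (ball c ρ)) :
    l * μ {x | l < maximalFunction μ u x} ≤ A * ∫⁻ y, u y ∂μ := by
  -- The covering lemma needs bounded radii, so exhaust the balls by those of radius at most `n`.
  let t (n : ℕ) : Set (X × ℝ) :=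
    {b | (ball b.1 b.2).Nonempty ∧ b.2 ≤ n ∧ l < ⨍⁻ y in ball b.1 b.2, u y ∂μ}
  have hmono : Monotone fun n ↦ ⋃ b ∈ t n, ball b.1 b.2 := fun m n hmn ↦
    biUnion_subset_biUnion_left fun b hb ↦ ⟨hb.1, hb.2.1.trans (by exact_mod_cast hmn), hb.2.2⟩
  have hsub : {x | l < maximalFunction μ u x} ⊆ ⋃ n, ⋃ b ∈ t n, ball b.1 b.2 := by
    intro x hx
    obtain ⟨c, ρ, hxc, hl⟩ := lt_maximalFunction_iff.1 hx
    obtain ⟨n, hn⟩ := exists_nat_ge ρ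
    exact mem_iUnion.2 ⟨n, mem_iUnion₂.2 ⟨(c, ρ), ⟨⟨x, hxc⟩, hn, hl⟩, hxc⟩⟩
  calc l * μ {x | l < maximalFunction μ u x}
      ≤ l * μ (⋃ n, ⋃ b ∈ t n, ball b.1 b.2) := by gcongr
    _ = ⨆ n, l * μ (⋃ b ∈ t n, ball b.1 b.2) := by
        rw [hmono.measure_iUnion, ENNReal.mul_iSup]
    _ ≤ A * ∫⁻ y, u y ∂μ :=
        iSup_le fun n ↦ mul_measure_biUnion_ball_le hμ (fun b hb ↦ ⟨hb.1, hb.2.1⟩) fun b hb ↦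
          ENNReal.mul_le_of_le_div (hb.2.2.le.trans_eq (setLAverage_eq _ _ _))

theorem mul_measure_two_mul_lt_maximalFunction_le
    (hμ : ∀ c ρ, μ (ball c (4 * ρ)) ≤ A * μ (ball c ρ)) (hu : Measurable u) :
    l * μ {x | 2 * l < maximalFunction μ u x} ≤ A * ∫⁻ y in {y | l < u y}, u y ∂μ := by
  have hset : MeasurableSet {y | l < u y} := measurableSet_lt measurable_const hu
  have hsplit (y : X) : u y ≤ {y | l < u y}.indicator u y + l := by
    by_cases hy : l < u y
    · simp only [indicator_of_mem (show y ∈ {y | l < u y} from hy), le_self_add]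
    · exact (not_lt.1 hy).trans le_add_self
  calc l * μ {x | 2 * l < maximalFunction μ u x}
      ≤ l * μ {x | l < maximalFunction μ ({y | l < u y}.indicator u) x} := by
        gcongr l * μ ?_
        intro x hx
        by_contra! hle
        exact (maximalFunction_le_add_of_le_add hsplit).not_gt
          ((add_le_add_left (not_lt.1 hle) l).trans_lt (by rwa [← two_mul]))
    _ ≤ A * ∫⁻ y in {y | l < u y}, u y ∂μ := by
        rw [← lintegral_indicator hset]
        exact mul_measure_lt_maximalFunction_le hμ

end MaximalFunction

section StrongType

variable {X : Type*} [PseudoMetricSpace X] [MeasurableSpace X] [OpensMeasurableSpace X]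
  [TopologicalSpace.SeparableSpace X] {μ : Measure X} [SFinite μ] {A : ℝ≥0}

theorem mul_lintegral_rpow_half_maximalFunction_le
    (hμ : ∀ c ρ, μ (ball c (4 * ρ)) ≤ A * μ (ball c ρ)) {p : ℝ} (hp : 1 < p) {u : X → ℝ≥0∞}
    (hu : Measurable u) :
    ENNReal.ofReal (p - 1) * ∫⁻ x, (2⁻¹ * maximalFunction μ u x) ^ p ∂μ ≤
      ENNReal.ofReal p * A * ∫⁻ x, u x ^ p ∂μ := by
  have hweak {t : ℝ} (ht : 0 < t) :
      ENNReal.ofReal (t ^ (p - 1)) * μ {x | ENNReal.ofReal t < 2⁻¹ * maximalFunction μ u x} ≤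
        A * (ENNReal.ofReal (t ^ (p - 1 - 1)) * ∫⁻ x in {x | ENNReal.ofReal t < u x}, u x ∂μ) := by
    have hpow : ENNReal.ofReal (t ^ (p - 1)) =
        ENNReal.ofReal (t ^ (p - 1 - 1)) * ENNReal.ofReal t := by
      rw [← ENNReal.ofReal_mul (by positivity), ← Real.rpow_add_one ht.ne', sub_add_cancel]
    have hhalf (m : ℝ≥0∞) : ENNReal.ofReal t < 2⁻¹ * m ↔ 2 * ENNReal.ofReal t < m := by
      rw [mul_comm 2⁻¹, ← div_eq_mul_inv, mul_comm 2,
        ENNReal.lt_div_iff_mul_lt (.inl two_ne_zero) (.inl ENNReal.ofNat_ne_top)]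
    simp only [hhalf]
    rw [hpow, mul_assoc, mul_left_comm (A : ℝ≥0∞)]
    gcongr ENNReal.ofReal (t ^ (p - 1 - 1)) * ?_
    exact mul_measure_two_mul_lt_maximalFunction_le hμ hu
  have hM : Measurable fun x ↦ 2⁻¹ * maximalFunction μ u x :=
    measurable_maximalFunction.const_mul _
  calc ENNReal.ofReal (p - 1) * ∫⁻ x, (2⁻¹ * maximalFunction μ u x) ^ p ∂μ
      = ENNReal.ofReal (p - 1) * (ENNReal.ofReal p * ∫⁻ t in Ioi (0 : ℝ),
          ENNReal.ofReal (t ^ (p - 1)) *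
            μ {x | ENNReal.ofReal t < 2⁻¹ * maximalFunction μ u x}) := by
        simpa only [Pi.one_apply, mul_one, setLIntegral_one] using
          congr_arg (ENNReal.ofReal (p - 1) * ·) (lintegral_rpow_mul_eq_lintegral_setLIntegral_lt
            (μ := μ) hM measurable_one (zero_lt_one.trans hp))
    _ ≤ ENNReal.ofReal (p - 1) * (ENNReal.ofReal p * ∫⁻ t in Ioi (0 : ℝ),
          A * (ENNReal.ofReal (t ^ (p - 1 - 1)) *
            ∫⁻ x in {x | ENNReal.ofReal t < u x}, u x ∂μ)) := by
        gcongr ENNReal.ofReal (p - 1) * (ENNReal.ofReal p * ?_)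
        exact setLIntegral_mono' measurableSet_Ioi fun t ht ↦ hweak ht
    _ = ENNReal.ofReal p * A * (ENNReal.ofReal (p - 1) * ∫⁻ t in Ioi (0 : ℝ),
          ENNReal.ofReal (t ^ (p - 1 - 1)) * ∫⁻ x in {x | ENNReal.ofReal t < u x}, u x ∂μ) := by
        rw [lintegral_const_mul' _ _ ENNReal.coe_ne_top]
        ring
    _ = ENNReal.ofReal p * A * ∫⁻ x, u x ^ p ∂μ := by
        rw [← lintegral_rpow_mul_eq_lintegral_setLIntegral_lt hu hu (sub_pos.2 hp)]
        congr! 3 with x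
        nth_rw 2 [← ENNReal.rpow_one (u x)]
        rw [← ENNReal.rpow_add_of_nonneg _ _ (sub_pos.2 hp).le zero_le_one, sub_add_cancel]

theorem exists_lintegral_rpow_maximalFunction_le
    (hμ : ∀ c ρ, μ (ball c (4 * ρ)) ≤ A * μ (ball c ρ)) {p : ℝ} (hp : 1 < p) :
    ∃ C : ℝ≥0, ∀ u : X → ℝ≥0∞, Measurable u →
      ∫⁻ x, maximalFunction μ u x ^ p ∂μ ≤ C * ∫⁻ x, u x ^ p ∂μ := by
  have hp₀ : 0 < p := zero_lt_one.trans hp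
  have htwo : (2 : ℝ≥0∞) ^ p ≠ ⊤ := ENNReal.rpow_ne_top_of_nonneg hp₀.le ENNReal.ofNat_ne_top
  refine ⟨(2 ^ p * ((ENNReal.ofReal (p - 1))⁻¹ * (ENNReal.ofReal p * A))).toNNReal, fun u hu ↦ ?_⟩
  have hp₁ : ENNReal.ofReal (p - 1) ≠ 0 := (ENNReal.ofReal_pos.2 (sub_pos.2 hp)).ne'
  rw [ENNReal.coe_toNNReal (by finiteness)]
  calc ∫⁻ x, maximalFunction μ u x ^ p ∂μ
      = 2 ^ p * ∫⁻ x, (2⁻¹ * maximalFunction μ u x) ^ p ∂μ := by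
        rw [← lintegral_const_mul' _ _ htwo]
        simp only [← ENNReal.mul_rpow_of_nonneg _ _ hp₀.le,
          ENNReal.mul_inv_cancel_left two_ne_zero ENNReal.ofNat_ne_top]
    _ ≤ 2 ^ p * ((ENNReal.ofReal (p - 1))⁻¹ * (ENNReal.ofReal p * A * ∫⁻ x, u x ^ p ∂μ)) := by
        gcongr
        rw [mul_comm (ENNReal.ofReal (p - 1))⁻¹, ← div_eq_mul_inv,
          ENNReal.le_div_iff_mul_le (.inl hp₁) (.inl ENNReal.ofReal_ne_top), mul_comm]
        exact mul_lintegral_rpow_half_maximalFunction_le hμ hp hu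
    _ = _ := by ring

theorem exists_eLpNorm_maximalFunction_le
    (hμ : ∀ c ρ, μ (ball c (4 * ρ)) ≤ A * μ (ball c ρ)) {p : ℝ≥0∞} (hp : 1 < p) :
    ∃ C : ℝ≥0, ∀ u : X → ℝ≥0∞, Measurable u →
      eLpNorm (maximalFunction μ u) p μ ≤ C * eLpNorm u p μ := by
  rcases eq_or_ne p ⊤ with rfl | hp_top
  · refine ⟨1, fun u _ ↦ ?_⟩
    simpa only [eLpNorm_exponent_top, ENNReal.coe_one, one_mul] using
      eLpNormEssSup_le_of_ae_enorm_bound (ae_of_all _ fun x ↦ maximalFunction_le_essSup)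
  · have hp₁ : 1 < p.toReal := by
      simpa only [ENNReal.toReal_one] using ENNReal.toReal_strict_mono hp_top hp
    have hp₀ : 0 ≤ p.toReal⁻¹ := by positivity
    obtain ⟨C, hC⟩ := exists_lintegral_rpow_maximalFunction_le hμ hp₁
    refine ⟨C ^ p.toReal⁻¹, fun u hu ↦ ?_⟩
    simp only [eLpNorm_eq_lintegral_rpow_enorm_toReal (zero_lt_one.trans hp).ne' hp_top, one_div,
      enorm_eq_self, ENNReal.coe_rpow_of_nonneg _ hp₀, ← ENNReal.mul_rpow_of_nonneg _ _ hp₀]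
    gcongr
    exact hC u hu

end StrongType

section Taylor

variable {E V : Type*} [NormedAddCommGroup E] [NormedSpace ℝ E] [NormedAddCommGroup V]
  [NormedSpace ℝ V]

theorem enorm_sub_sub_deriv_le_lintegral {φ : ℝ → V} (hφ : ContDiff ℝ 2 φ) :
    ‖φ 1 - φ 0 - deriv φ 0‖ₑ ≤ ∫⁻ τ in Ioc (0 : ℝ) 1, ‖deriv (deriv φ) τ‖ₑ := by
  have hφ' : ContDiff ℝ 1 (deriv φ) := hφ.deriv'
  have hcont : Continuous fun τ ↦ ‖deriv (deriv φ) τ‖ := hφ'.continuous_deriv_one.norm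
  set K : ℝ := ∫ τ in (0 : ℝ)..1, ‖deriv (deriv φ) τ‖ with hK
  have hderiv_sub {t : ℝ} (ht : t ∈ Ico (0 : ℝ) 1) : ‖deriv φ t - deriv φ 0‖ ≤ K :=
    (norm_sub_le_integral_of_norm_deriv_le_of_le ht.1 hφ'.continuous.continuousOn
      (hφ'.differentiable one_ne_zero).differentiableOn (ae_of_all _ fun _ _ ↦ le_rfl)
      (hcont.intervalIntegrable 0 t)).trans
      (intervalIntegral.integral_mono_interval le_rfl ht.1 ht.2.le
        (ae_of_all _ fun _ ↦ norm_nonneg _)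
        (hcont.intervalIntegrable 0 1))
  have hnorm : ‖φ 1 - φ 0 - deriv φ 0‖ ≤ K := by
    have hψ (t : ℝ) : HasDerivAt (fun t ↦ φ t - t • deriv φ 0) (deriv φ t - deriv φ 0) t := by
      simpa only [one_smul] using (hφ.differentiable two_ne_zero t).hasDerivAt.fun_sub
        ((hasDerivAt_id' t).smul_const (deriv φ 0))
    simpa only [one_smul, zero_smul, sub_zero, sub_right_comm] using
      norm_image_sub_le_of_norm_deriv_le_segment_01' (fun t _ ↦ (hψ t).hasDerivWithinAt)
        fun t ht ↦ hderiv_sub ht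
  calc ‖φ 1 - φ 0 - deriv φ 0‖ₑ ≤ ENNReal.ofReal K := by
        rw [← ofReal_norm]
        exact ENNReal.ofReal_le_ofReal hnorm
    _ = ∫⁻ τ in Ioc (0 : ℝ) 1, ‖deriv (deriv φ) τ‖ₑ := by
        simp_rw [hK, intervalIntegral.integral_of_le zero_le_one, ← ofReal_norm]
        exact ofReal_integral_eq_lintegral_ofReal hcont.integrableOn_Ioc
          (ae_of_all _ fun _ ↦ norm_nonneg _)

theorem enorm_taylor_remainder_le {F : E → V} (hF : ContDiff ℝ 2 F) (x w : E) :
    ‖F (x + w) - F x - fderiv ℝ F x w‖ₑ ≤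
      ‖w‖ₑ ^ 2 * ∫⁻ τ in Ioc (0 : ℝ) 1, ‖fderiv ℝ (fderiv ℝ F) (x + τ • w)‖ₑ := by
  have hline (τ : ℝ) : HasDerivAt (fun τ : ℝ ↦ x + τ • w) w τ := by
    simpa only [one_smul] using ((hasDerivAt_id' τ).smul_const w).const_add x
  have hF' : Differentiable ℝ (fderiv ℝ F) :=
    (hF.fderiv_right (m := 1) le_rfl).differentiable one_ne_zero
  have hderiv : deriv (fun τ : ℝ ↦ F (x + τ • w)) = fun τ ↦ fderiv ℝ F (x + τ • w) w :=
    funext fun τ ↦ ((hF.differentiable two_ne_zero _).hasFDerivAt.comp_hasDerivAt τ (hline τ)).deriv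
  have hderiv₂ (τ : ℝ) : deriv (fun τ : ℝ ↦ fderiv ℝ F (x + τ • w) w) τ =
      fderiv ℝ (fderiv ℝ F) (x + τ • w) w w :=
    (((hF' _).hasFDerivAt.comp_hasDerivAt τ (hline τ)).clm_apply (hasDerivAt_const τ w)).deriv.trans
      (by simp only [map_zero, add_zero])
  have hφ : ContDiff ℝ 2 fun τ : ℝ ↦ F (x + τ • w) := by fun_prop
  calc ‖F (x + w) - F x - fderiv ℝ F x w‖ₑ
      ≤ ∫⁻ τ in Ioc (0 : ℝ) 1, ‖fderiv ℝ (fderiv ℝ F) (x + τ • w) w w‖ₑ := by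
        simpa only [hderiv, hderiv₂, one_smul, zero_smul, add_zero] using
          enorm_sub_sub_deriv_le_lintegral hφ
    _ ≤ ∫⁻ τ in Ioc (0 : ℝ) 1, ‖w‖ₑ ^ 2 * ‖fderiv ℝ (fderiv ℝ F) (x + τ • w)‖ₑ := by
        gcongr with τ
        calc ‖fderiv ℝ (fderiv ℝ F) (x + τ • w) w w‖ₑ
            ≤ ‖fderiv ℝ (fderiv ℝ F) (x + τ • w)‖ₑ * ‖w‖ₑ * ‖w‖ₑ :=
              (ContinuousLinearMap.le_opENorm _ _).trans
                (by gcongr; exact ContinuousLinearMap.le_opENorm _ _)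
          _ = _ := by ring
    _ = _ := lintegral_const_mul' _ _ (by finiteness)

theorem sq_opNorm_le_of_forall_norm_le_add {L : E →L[ℝ] V} {P Q : ℝ} (hP : 0 ≤ P) (hQ : 0 ≤ Q)
    (hL : ∀ w, ‖L w‖ ≤ P + Q * ‖w‖ ^ 2) : ‖L‖ ^ 2 ≤ 4 * Q * P := by
  refine (Real.le_sqrt (norm_nonneg _) (by positivity)).1
    (L.opNorm_le_of_unit_norm (Real.sqrt_nonneg _) fun v hv ↦ Real.le_sqrt_of_sq_le ?_)
  have hquad (t : ℝ) : 0 ≤ Q * (t * t) + -‖L v‖ * t + P := by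
    have h := hL (t • v)
    rw [map_smul, norm_smul, norm_smul, hv, mul_one, Real.norm_eq_abs, sq_abs] at h
    nlinarith [le_abs_self t, norm_nonneg (L v)]
  have := discrim_le_zero hquad
  rw [discrim, neg_sq] at this
  linarith

end Taylor

theorem mul_measure_ball_le_two_mul_setLIntegral {E : Type*} [NormedAddCommGroup E]
    [MeasurableSpace E] [BorelSpace E] {μ : Measure E} [μ.IsAddRightInvariant] {G : E → ℝ≥0∞}
    (hG : Measurable G) {a : ℝ≥0∞} {w : E} {t : ℝ} (hw : ‖w‖ ≤ t) (ha : ∀ s, a ≤ G (s + w) + G s) :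
    a * μ (ball 0 t) ≤ 2 * ∫⁻ s in ball 0 (2 * t), G s ∂μ := by
  have hsub : ball (0 : E) t ⊆ ball 0 (2 * t) :=
    ball_subset_ball (by linarith [norm_nonneg w])
  have hshift : ∫⁻ s in ball 0 t, G (s + w) ∂μ ≤ ∫⁻ s in ball 0 (2 * t), G s ∂μ := by
    calc ∫⁻ s in ball 0 t, G (s + w) ∂μ
        ≤ ∫⁻ s in (· + w) ⁻¹' ball 0 (2 * t), G (s + w) ∂μ := by
          refine lintegral_mono_set fun s hs ↦ mem_ball_zero_iff.2 ?_
          linarith [norm_add_le s w, mem_ball_zero_iff.1 hs]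
      _ = ∫⁻ s in ball 0 (2 * t), G s ∂μ := by
          rw [← setLIntegral_map measurableSet_ball hG (measurable_add_const w),
            map_add_right_eq_self]
  calc a * μ (ball 0 t) = ∫⁻ _ in ball 0 t, a ∂μ := (setLIntegral_const _ _).symm
    _ ≤ ∫⁻ s in ball 0 t, (G (s + w) + G s) ∂μ := lintegral_mono ha
    _ = ∫⁻ s in ball 0 t, G (s + w) ∂μ + ∫⁻ s in ball 0 t, G s ∂μ := lintegral_add_right _ hG
    _ ≤ 2 * ∫⁻ s in ball 0 (2 * t), G s ∂μ := by
        rw [two_mul]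
        exact add_le_add hshift (lintegral_mono_set hsub)

section PointwiseInterpolation

variable {E V : Type*} [NormedAddCommGroup E] [NormedSpace ℝ E] [FiniteDimensional ℝ E]
  [MeasurableSpace E] [BorelSpace E] {μ : Measure E} [μ.IsAddHaarMeasure]
  [NormedAddCommGroup V] [NormedSpace ℝ V]

open Module (finrank)

theorem addHaar_ball_four_mul_le (c : E) (ρ : ℝ) :
    μ (ball c (4 * ρ)) ≤ ((4 ^ finrank ℝ E : ℝ≥0) : ℝ≥0∞) * μ (ball c ρ) := by
  rw [Measure.addHaar_ball_mul_of_pos μ c four_pos, Measure.addHaar_ball_center μ c]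
  simp [ENNReal.ofReal_pow]

theorem setLIntegral_ball_comp_add_smul_le {U : E → ℝ≥0∞} (hU : Measurable U) (x : E) {τ R : ℝ}
    (hτ : 0 < τ) (hR : 0 < R) :
    ∫⁻ w in ball 0 R, U (x + τ • w) ∂μ ≤ μ (ball 0 R) * maximalFunction μ U x := by
  have hT : Measurable fun w : E ↦ x + τ • w := by fun_prop
  have hpre : (fun w : E ↦ x + τ • w) ⁻¹' ball x (τ * R) = ball 0 R := by
    ext w
    simp [norm_smul, abs_of_pos hτ, hτ]
  obtain ⟨c, hc⟩ : ∃ c : ℝ≥0∞, μ.map (fun w ↦ x + τ • w) = c • μ := by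
    refine ⟨ENNReal.ofReal |(τ ^ finrank ℝ E)⁻¹|, ?_⟩
    rw [← Function.comp_def (x + ·) (τ • ·), ← Measure.map_map (by fun_prop) (by fun_prop),
      Measure.map_addHaar_smul μ hτ.ne', Measure.map_smul, map_add_left_eq_self]
  calc ∫⁻ w in ball 0 R, U (x + τ • w) ∂μ
      = c * ∫⁻ y in ball x (τ * R), U y ∂μ := by
        rw [← hpre, ← setLIntegral_map measurableSet_ball hU hT, hc, Measure.restrict_smul,
          lintegral_smul_measure, smul_eq_mul]
    _ ≤ c * (μ (ball x (τ * R)) * maximalFunction μ U x) := by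
        rw [← measure_mul_setLAverage _ measure_ball_lt_top.ne]
        gcongr
        exact setLAverage_ball_le_maximalFunction (mem_ball_self (by positivity))
    _ = μ (ball 0 R) * maximalFunction μ U x := by
        rw [← mul_assoc, ← smul_eq_mul c, ← Measure.smul_apply, ← hc,
          Measure.map_apply hT measurableSet_ball, hpre]

theorem setLIntegral_ball_taylor_remainder_le {F : E → V} (hF : ContDiff ℝ 2 F) (x : E) {R : ℝ}
    (hR : 0 < R) :
    ∫⁻ w in ball 0 R, ‖F (x + w) - F x - fderiv ℝ F x w‖ₑ ∂μ ≤
      μ (ball 0 R) * (ENNReal.ofReal R ^ 2 *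
        maximalFunction μ (fun y ↦ ‖fderiv ℝ (fderiv ℝ F) y‖ₑ) x) := by
  have hcont : Continuous fun y ↦ ‖fderiv ℝ (fderiv ℝ F) y‖ₑ :=
    ((hF.fderiv_right (m := 1) le_rfl).continuous_fderiv one_ne_zero).enorm
  calc ∫⁻ w in ball 0 R, ‖F (x + w) - F x - fderiv ℝ F x w‖ₑ ∂μ
      ≤ ∫⁻ w in ball 0 R, ENNReal.ofReal R ^ 2 *
          (∫⁻ τ in Ioc (0 : ℝ) 1, ‖fderiv ℝ (fderiv ℝ F) (x + τ • w)‖ₑ) ∂μ := by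
        refine setLIntegral_mono' measurableSet_ball fun w hw ↦
          (enorm_taylor_remainder_le hF x w).trans ?_
        gcongr
        rw [← ofReal_norm]
        exact ENNReal.ofReal_le_ofReal (mem_ball_zero_iff.1 hw).le
    _ = ENNReal.ofReal R ^ 2 * ∫⁻ τ in Ioc (0 : ℝ) 1,
          ∫⁻ w in ball 0 R, ‖fderiv ℝ (fderiv ℝ F) (x + τ • w)‖ₑ ∂μ := by
        rw [lintegral_const_mul' _ _ (by finiteness), lintegral_lintegral_swap]
        exact (hcont.comp (by fun_prop : Continuous fun z : E × ℝ ↦ x + z.2 • z.1)).aemeasurable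
    _ ≤ ENNReal.ofReal R ^ 2 * ∫⁻ _ in Ioc (0 : ℝ) 1,
          μ (ball 0 R) * maximalFunction μ (fun y ↦ ‖fderiv ℝ (fderiv ℝ F) y‖ₑ) x := by
        gcongr ENNReal.ofReal R ^ 2 * ?_
        exact setLIntegral_mono' measurableSet_Ioc fun τ hτ ↦
          setLIntegral_ball_comp_add_smul_le hcont.measurable x hτ.1 hR
    _ = _ := by
        rw [setLIntegral_const, Real.volume_Ioc, sub_zero, ENNReal.ofReal_one, mul_one]
        ring

theorem enorm_fderiv_apply_le_maximalFunction {F : E → V} (hF : ContDiff ℝ 2 F) (x w : E) :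
    ‖fderiv ℝ F x w‖ₑ ≤ 2 ^ (finrank ℝ E + 1) * (maximalFunction μ (fun y ↦ ‖F y‖ₑ) x +
      (2 * ‖w‖ₑ) ^ 2 * maximalFunction μ (fun y ↦ ‖fderiv ℝ (fderiv ℝ F) y‖ₑ) x) := by
  rcases eq_or_ne w 0 with rfl | hw
  · simp only [map_zero, enorm_zero, zero_le]
  have hFc : Continuous F := hF.continuous
  set N := maximalFunction μ (fun y ↦ ‖F y‖ₑ) x +
    (2 * ‖w‖ₑ) ^ 2 * maximalFunction μ (fun y ↦ ‖fderiv ℝ (fderiv ℝ F) y‖ₑ) x with hN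
  have hR : 0 < 2 * ‖w‖ := mul_pos two_pos (norm_pos_iff.2 hw)
  let G (s : E) : ℝ≥0∞ := ‖F (x + s)‖ₑ + ‖F (x + s) - F x - fderiv ℝ F x s‖ₑ
  have hG : Measurable G := Continuous.measurable (by fun_prop)
  have hdiff (s : E) : ‖fderiv ℝ F x w‖ₑ ≤ G (s + w) + G s := by
    have h : fderiv ℝ F x w = F (x + (s + w)) -
        (F (x + (s + w)) - F x - fderiv ℝ F x (s + w)) -
          (F (x + s) - (F (x + s) - F x - fderiv ℝ F x s)) := by
      rw [map_add]
      abel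
    rw [h]
    exact enorm_sub_le.trans (add_le_add enorm_sub_le enorm_sub_le)
  have hint : ∫⁻ s in ball 0 (2 * ‖w‖), G s ∂μ ≤ μ (ball 0 (2 * ‖w‖)) * N := by
    rw [lintegral_add_left (Continuous.measurable (by fun_prop)), hN, mul_add]
    gcongr
    · simpa only [one_smul] using setLIntegral_ball_comp_add_smul_le (μ := μ)
        hFc.enorm.measurable x one_pos hR
    · simpa only [ENNReal.ofReal_mul zero_le_two, ENNReal.ofReal_ofNat, ofReal_norm] using
        setLIntegral_ball_taylor_remainder_le (μ := μ) hF x hR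
  have hball : μ (ball (0 : E) (2 * ‖w‖)) = 2 ^ finrank ℝ E * μ (ball 0 ‖w‖) := by
    rw [Measure.addHaar_ball_mul_of_pos μ 0 two_pos, ENNReal.ofReal_pow zero_le_two,
      ENNReal.ofReal_ofNat]
  refine (ENNReal.mul_le_mul_iff_left (measure_ball_pos μ 0 (norm_pos_iff.2 hw)).ne'
    measure_ball_lt_top.ne).1 ?_
  calc ‖fderiv ℝ F x w‖ₑ * μ (ball 0 ‖w‖)
      ≤ 2 * ∫⁻ s in ball 0 (2 * ‖w‖), G s ∂μ :=
        mul_measure_ball_le_two_mul_setLIntegral hG le_rfl hdiff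
    _ ≤ 2 * (2 ^ finrank ℝ E * μ (ball 0 ‖w‖) * N) := by
        rw [← hball]
        gcongr
    _ = 2 ^ (finrank ℝ E + 1) * N * μ (ball 0 ‖w‖) := by ring

theorem sq_enorm_fderiv_le_maximalFunction_mul {F : E → V} (hF : ContDiff ℝ 2 F) {x : E}
    (hM : maximalFunction μ (fun y ↦ ‖F y‖ₑ) x ≠ ⊤)
    (hM₂ : maximalFunction μ (fun y ↦ ‖fderiv ℝ (fderiv ℝ F) y‖ₑ) x ≠ ⊤) :
    ‖fderiv ℝ F x‖ₑ ^ 2 ≤ 4 ^ (finrank ℝ E + 3) * maximalFunction μ (fun y ↦ ‖F y‖ₑ) x *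
      maximalFunction μ (fun y ↦ ‖fderiv ℝ (fderiv ℝ F) y‖ₑ) x := by
  set P := maximalFunction μ (fun y ↦ ‖F y‖ₑ) x
  set Q := maximalFunction μ (fun y ↦ ‖fderiv ℝ (fderiv ℝ F) y‖ₑ) x
  have hL (w : E) : ‖fderiv ℝ F x w‖ ≤
      2 ^ (finrank ℝ E + 1) * P.toReal + 2 ^ (finrank ℝ E + 3) * Q.toReal * ‖w‖ ^ 2 := by
    have h := ENNReal.toReal_mono (by finiteness)
      (enorm_fderiv_apply_le_maximalFunction (μ := μ) hF x w)
    rw [toReal_enorm, ENNReal.toReal_mul, ENNReal.toReal_add hM (by finiteness)] at h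
    simp only [ENNReal.toReal_pow, ENNReal.toReal_mul, ENNReal.toReal_ofNat, toReal_enorm] at h
    refine h.trans_eq ?_
    ring
  have hreal := sq_opNorm_le_of_forall_norm_le_add (by positivity) (by positivity) hL
  rw [← ENNReal.toReal_le_toReal (by finiteness) (by finiteness)]
  simp only [ENNReal.toReal_pow, ENNReal.toReal_mul, ENNReal.toReal_ofNat, toReal_enorm]
  refine hreal.trans_eq ?_
  rw [show (4 : ℝ) = 2 ^ 2 by norm_num, ← pow_mul]
  ring

end PointwiseInterpolation

section LpInterpolation

theorem ae_lt_top_of_eLpNorm_ne_top {X : Type*} [MeasurableSpace X] {μ : Measure X}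
    {u : X → ℝ≥0∞} {p : ℝ≥0∞} (hu : Measurable u) (hp : p ≠ 0) (h : eLpNorm u p μ ≠ ⊤) :
    ∀ᵐ x ∂μ, u x < ⊤ := by
  rcases eq_or_ne p ⊤ with rfl | hp_top
  · exact (enorm_ae_le_eLpNormEssSup u μ).mono fun x hx ↦
      hx.trans_lt (by rwa [← eLpNorm_exponent_top, lt_top_iff_ne_top])
  · have hint := lintegral_rpow_enorm_lt_top_of_eLpNorm_lt_top hp hp_top h.lt_top
    exact (ae_lt_top (hu.pow_const _) hint.ne).mono fun x hx ↦
      (ENNReal.rpow_lt_top_iff_of_pos (ENNReal.toReal_pos hp hp_top)).1 hx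

theorem sq_eLpNorm_le_of_sq_enorm_le_mul {X V : Type*} [MeasurableSpace X] {μ : Measure X}
    [NormedAddCommGroup V] {f : X → V} {u w : X → ℝ≥0∞} {K : ℝ≥0} {a b p : ℝ≥0∞}
    (hab : a⁻¹ + b⁻¹ = 2 * p⁻¹) (hu : Measurable u) (hw : Measurable w)
    (hu_top : ∀ᵐ x ∂μ, u x < ⊤) (hw_top : ∀ᵐ x ∂μ, w x < ⊤)
    (h : ∀ᵐ x ∂μ, ‖f x‖ₑ ^ 2 ≤ K * u x * w x) :
    eLpNorm f p μ ^ 2 ≤ K * eLpNorm u a μ * eLpNorm w b μ := by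
  have : ENNReal.HolderTriple a b (p / 2) :=
    ⟨by rw [hab, ENNReal.inv_div (.inl ENNReal.ofNat_ne_top) (.inl two_ne_zero), div_eq_mul_inv]⟩
  have htoReal {v : X → ℝ≥0∞} (hv : ∀ᵐ x ∂μ, v x < ⊤) (q : ℝ≥0∞) :
      eLpNorm (fun x ↦ (v x).toReal) q μ = eLpNorm v q μ :=
    eLpNorm_congr_enorm_ae (hv.mono fun x hx ↦ by simp [hx.ne])
  calc eLpNorm f p μ ^ 2 = eLpNorm (fun x ↦ ‖f x‖ₑ ^ (2 : ℝ)) (p / 2) μ := by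
        rw [eLpNorm_enorm_rpow f two_pos, ENNReal.ofReal_ofNat,
          ENNReal.div_mul_cancel two_ne_zero ENNReal.ofNat_ne_top, ENNReal.rpow_two]
    _ ≤ eLpNorm (fun x ↦ K * (u x).toReal * (w x).toReal) (p / 2) μ := by
        refine eLpNorm_mono_enorm_ae ?_
        filter_upwards [h, hu_top, hw_top] with x hx hux hwx
        simpa [hux.ne, hwx.ne] using hx
    _ ≤ K * eLpNorm (fun x ↦ (u x).toReal) a μ * eLpNorm (fun x ↦ (w x).toReal) b μ :=
        eLpNorm_le_eLpNorm_mul_eLpNorm'_of_norm hu.ennreal_toReal.aestronglyMeasurable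
          hw.ennreal_toReal.aestronglyMeasurable (fun s t ↦ K * s * t) K
          (ae_of_all _ fun x ↦ by simp)
    _ = K * eLpNorm u a μ * eLpNorm w b μ := by rw [htoReal hu_top, htoReal hw_top]

variable {E V : Type*} [NormedAddCommGroup E] [NormedSpace ℝ E] [FiniteDimensional ℝ E]
  [MeasurableSpace E] [BorelSpace E] {μ : Measure E} [μ.IsAddHaarMeasure]
  [NormedAddCommGroup V] [NormedSpace ℝ V]

theorem exists_sq_eLpNorm_fderiv_le {a b p : ℝ≥0∞} (ha : 1 < a) (hb : 1 < b)
    (hab : a⁻¹ + b⁻¹ = 2 * p⁻¹) :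
    ∃ C : ℝ≥0, ∀ F : E → V, ContDiff ℝ 2 F → eLpNorm F a μ ≠ ⊤ →
      eLpNorm (fderiv ℝ (fderiv ℝ F)) b μ ≠ ⊤ →
      eLpNorm (fderiv ℝ F) p μ ^ 2 ≤
        C * (eLpNorm F a μ * eLpNorm (fderiv ℝ (fderiv ℝ F)) b μ) := by
  obtain ⟨Ca, hCa⟩ := exists_eLpNorm_maximalFunction_le (μ := μ) addHaar_ball_four_mul_le ha
  obtain ⟨Cb, hCb⟩ := exists_eLpNorm_maximalFunction_le (μ := μ) addHaar_ball_four_mul_le hb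
  refine ⟨4 ^ (Module.finrank ℝ E + 3) * Ca * Cb, fun F hF hFa hFb ↦ ?_⟩
  set u : E → ℝ≥0∞ := fun y ↦ ‖F y‖ₑ
  set w : E → ℝ≥0∞ := fun y ↦ ‖fderiv ℝ (fderiv ℝ F) y‖ₑ
  have hMu : eLpNorm (maximalFunction μ u) a μ ≤ Ca * eLpNorm F a μ :=
    (hCa u hF.continuous.enorm.measurable).trans_eq (by rw [eLpNorm_enorm])
  have hMw : eLpNorm (maximalFunction μ w) b μ ≤ Cb * eLpNorm (fderiv ℝ (fderiv ℝ F)) b μ :=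
    (hCb w ((hF.fderiv_right (m := 1) le_rfl).continuous_fderiv one_ne_zero).enorm.measurable
      ).trans_eq (by rw [eLpNorm_enorm])
  have hu_top : ∀ᵐ x ∂μ, maximalFunction μ u x < ⊤ :=
    ae_lt_top_of_eLpNorm_ne_top measurable_maximalFunction (zero_lt_one.trans ha).ne'
      (ne_top_of_le_ne_top (by finiteness) hMu)
  have hw_top : ∀ᵐ x ∂μ, maximalFunction μ w x < ⊤ :=
    ae_lt_top_of_eLpNorm_ne_top measurable_maximalFunction (zero_lt_one.trans hb).ne'
      (ne_top_of_le_ne_top (by finiteness) hMw)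
  calc eLpNorm (fderiv ℝ F) p μ ^ 2
      ≤ (4 ^ (Module.finrank ℝ E + 3) : ℝ≥0) * eLpNorm (maximalFunction μ u) a μ *
          eLpNorm (maximalFunction μ w) b μ := by
        refine sq_eLpNorm_le_of_sq_enorm_le_mul hab measurable_maximalFunction
          measurable_maximalFunction hu_top hw_top ?_
        filter_upwards [hu_top, hw_top] with x hux hwx
        simpa using sq_enorm_fderiv_le_maximalFunction_mul hF hux.ne hwx.ne
    _ ≤ (4 ^ (Module.finrank ℝ E + 3) : ℝ≥0) * (Ca * eLpNorm F a μ) *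
          (Cb * eLpNorm (fderiv ℝ (fderiv ℝ F)) b μ) := by gcongr
    _ = _ := by
        push_cast
        ring

end LpInterpolation

section LogConvexSequences

variable {x : ℕ → ℝ≥0∞} {k : ℕ}

theorem le_zero_or_le_succ_of_sq_le_mul (hx : ∀ j, x j ≠ ⊤)
    (h : ∀ j, j + 2 ≤ k → x (j + 1) ^ 2 ≤ x j * x (j + 2)) {j : ℕ} (hj : j + 1 ≤ k) :
    x j ≤ x 0 ∨ x j ≤ x (j + 1) := by
  induction j with
  | zero => exact .inl le_rfl
  | succ j ih =>
    by_contra! hlt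
    have hj_le : x j ≤ x (j + 1) := (ih (by lia)).elim (fun h0 ↦ h0.trans hlt.1.le) id
    have hmul : x (j + 1) * x (j + 1) ≤ x (j + 1) * x (j + 2) := by
      rw [← sq]
      exact (h j hj).trans (by gcongr)
    have hpos : x (j + 1) ≠ 0 := (bot_le.trans_lt hlt.1).ne'
    exact hlt.2.not_ge ((ENNReal.mul_le_mul_iff_right hpos (hx _)).1 hmul)

theorem le_max_endpoints_of_sq_le_mul (hx : ∀ j, x j ≠ ⊤)
    (h : ∀ j, j + 2 ≤ k → x (j + 1) ^ 2 ≤ x j * x (j + 2)) {j : ℕ} (hj : j ≤ k) :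
    x j ≤ max (x 0) (x k) := by
  induction hj using Nat.decreasingInduction with
  | self => exact le_max_right _ _
  | of_succ j hj ih =>
    exact (le_zero_or_le_succ_of_sq_le_mul hx h hj).elim (fun h0 ↦ h0.trans (le_max_left _ _))
      (fun hs ↦ hs.trans ih)

theorem le_pow_mul_max_endpoints_of_sq_le_mul {K : ℝ≥0} (hK : 1 ≤ K) (hx : ∀ j, x j ≠ ⊤)
    (h : ∀ j, j + 2 ≤ k → x (j + 1) ^ 2 ≤ K * (x j * x (j + 2))) {j : ℕ} (hj : j ≤ k) :
    x j ≤ K ^ k ^ 2 * max (x 0) (x k) := by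
  have hK' : 1 ≤ (K : ℝ≥0∞) := by exact_mod_cast hK
  -- The weight `K ^ j ^ 2` absorbs the constant, as `j ^ 2` has second difference `2 ≥ 1`.
  have hweighted (j : ℕ) (hj : j + 2 ≤ k) : (K ^ (j + 1) ^ 2 * x (j + 1)) ^ 2 ≤
      K ^ j ^ 2 * x j * (K ^ (j + 2) ^ 2 * x (j + 2)) := by
    calc (K ^ (j + 1) ^ 2 * x (j + 1)) ^ 2 = K ^ (2 * (j + 1) ^ 2) * x (j + 1) ^ 2 := by ring
      _ ≤ K ^ (2 * (j + 1) ^ 2) * (K * (x j * x (j + 2))) := by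
          gcongr
          exact h j hj
      _ = K ^ (2 * (j + 1) ^ 2 + 1) * (x j * x (j + 2)) := by ring
      _ ≤ K ^ (j ^ 2 + (j + 2) ^ 2) * (x j * x (j + 2)) := by
          gcongr ?_ * (x j * x (j + 2))
          exact pow_le_pow_right₀ hK' (by nlinarith)
      _ = _ := by ring
  calc x j ≤ K ^ j ^ 2 * x j := le_mul_of_one_le_left' (one_le_pow₀ hK')
    _ ≤ max (K ^ 0 ^ 2 * x 0) (K ^ k ^ 2 * x k) :=
        le_max_endpoints_of_sq_le_mul (x := fun j ↦ K ^ j ^ 2 * x j)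
          (fun j ↦ ENNReal.mul_ne_top (ENNReal.pow_ne_top ENNReal.coe_ne_top) (hx j)) hweighted hj
    _ ≤ max (K ^ k ^ 2 * x 0) (K ^ k ^ 2 * x k) := by
        refine max_le_max ?_ le_rfl
        gcongr
        exact k.zero_le
    _ = K ^ k ^ 2 * max (x 0) (x k) := (mul_max _ _ _).symm

end LogConvexSequences

section InterpolatedExponent

variable {s t s' t' r : ℝ≥0∞} {m n : ℕ}

/-- The harmonic mean of the Lebesgue exponents `s` and `t` with weights `m` and `n`, that is,
the exponent whose inverse lies on the segment from `s⁻¹` to `t⁻¹` in the proportion `n : m`.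
For `m = n = 0` it has the junk value `⊤`. -/
noncomputable def interpolatedExponent (s t : ℝ≥0∞) (m n : ℕ) : ℝ≥0∞ :=
  ((m * s⁻¹ + n * t⁻¹) / (m + n : ℕ))⁻¹

theorem inv_interpolatedExponent :
    (interpolatedExponent s t m n)⁻¹ = (m * s⁻¹ + n * t⁻¹) / (m + n : ℕ) :=
  inv_inv _

theorem interpolatedExponent_zero_right (hm : m ≠ 0) : interpolatedExponent s t m 0 = s := by
  rw [← inv_inj, inv_interpolatedExponent, Nat.cast_zero, zero_mul, add_zero, add_zero,
    mul_comm, ENNReal.mul_div_cancel_right (Nat.cast_ne_zero.2 hm) (ENNReal.natCast_ne_top m)]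

theorem interpolatedExponent_zero_left (hn : n ≠ 0) : interpolatedExponent s t 0 n = t := by
  rw [← inv_inj, inv_interpolatedExponent, Nat.cast_zero, zero_mul, zero_add, zero_add,
    mul_comm, ENNReal.mul_div_cancel_right (Nat.cast_ne_zero.2 hn) (ENNReal.natCast_ne_top n)]

theorem min_le_interpolatedExponent : min s t ≤ interpolatedExponent s t m n := by
  rw [interpolatedExponent, ENNReal.le_inv_iff_le_inv]
  refine ENNReal.div_le_of_le_mul ?_
  rw [Nat.cast_add, mul_add, mul_comm _ (m : ℝ≥0∞), mul_comm _ (n : ℝ≥0∞)]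
  gcongr
  · exact min_le_left s t
  · exact min_le_right s t

theorem inv_interpolatedExponent_add_inv_interpolatedExponent :
    (interpolatedExponent s t (m + 2) n)⁻¹ + (interpolatedExponent s t m (n + 2))⁻¹ =
      2 * (interpolatedExponent s t (m + 1) (n + 1))⁻¹ := by
  simp only [inv_interpolatedExponent, show m + 2 + n = m + n + 2 by ring,
    show m + (n + 2) = m + n + 2 by ring, show m + 1 + (n + 1) = m + n + 2 by ring,
    ← ENNReal.add_div, ← mul_div_assoc]
  congr 1
  push_cast
  ring

theorem holderTriple_interpolatedExponent (hs : s⁻¹ + s'⁻¹ = r⁻¹) (ht : t⁻¹ + t'⁻¹ = r⁻¹)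
    (hmn : m + n ≠ 0) :
    ENNReal.HolderTriple (interpolatedExponent s t m n) (interpolatedExponent s' t' m n) r := by
  refine ⟨?_⟩
  calc (interpolatedExponent s t m n)⁻¹ + (interpolatedExponent s' t' m n)⁻¹
      = (m * (s⁻¹ + s'⁻¹) + n * (t⁻¹ + t'⁻¹)) / (m + n : ℕ) := by
        rw [inv_interpolatedExponent, inv_interpolatedExponent, ← ENNReal.add_div]
        ring_nf
    _ = r⁻¹ := by
        rw [hs, ht, ← add_mul, ← Nat.cast_add,
          mul_comm, ENNReal.mul_div_cancel_right (Nat.cast_ne_zero.2 hmn)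
            (ENNReal.natCast_ne_top _)]

end InterpolatedExponent

section SchwartzDerivatives

variable {E V : Type*} [NormedAddCommGroup E] [NormedSpace ℝ E] [NormedAddCommGroup V]
  [NormedSpace ℝ V]

set_option maxSynthPendingDepth 3 in
theorem norm_fderiv_fderiv_iteratedFDeriv {f : E → V} {n : ℕ} {x : E} :
    ‖fderiv ℝ (fderiv ℝ (iteratedFDeriv ℝ n f)) x‖ = ‖iteratedFDeriv ℝ (n + 2) f x‖ := by
  rw [fderiv_iteratedFDeriv, LinearIsometryEquiv.comp_fderiv, ← norm_fderiv_iteratedFDeriv]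
  exact LinearIsometry.norm_toContinuousLinearMap_comp
    (continuousMultilinearCurryLeftEquiv ℝ (fun _ ↦ E) V).toLinearIsometry

variable [MeasurableSpace E] {μ : Measure E}

theorem eLpNorm_iteratedFDeriv_zero {f : E → V} {p : ℝ≥0∞} :
    eLpNorm (iteratedFDeriv ℝ 0 f) p μ = eLpNorm f p μ :=
  eLpNorm_congr_norm_ae (.of_forall fun _ ↦ norm_iteratedFDeriv_zero)

theorem eLpNorm_iteratedFDeriv_ne_top [μ.HasTemperateGrowth] (f : SchwartzMap E V) (n : ℕ)
    (p : ℝ≥0∞) : eLpNorm (iteratedFDeriv ℝ n f) p μ ≠ ⊤ := by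
  obtain ⟨N, hN⟩ := Measure.HasTemperateGrowth.exists_eLpNorm_lt_top p ‹μ.HasTemperateGrowth›
  set c : ℝ := 2 ^ N * ((Finset.Iic (N, n)).sup fun m ↦ SchwartzMap.seminorm ℝ m.1 m.2) f
  have hdecay (x : E) : ‖iteratedFDeriv ℝ n f x‖ ≤ c * ‖(1 + ‖x‖) ^ (-N : ℝ)‖ := by
    have hpos : 0 < 1 + ‖x‖ := by positivity
    rw [Real.norm_of_nonneg (by positivity), Real.rpow_neg hpos.le, Real.rpow_natCast,
      ← div_eq_mul_inv, le_div_iff₀' (by positivity)]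
    exact SchwartzMap.one_add_le_sup_seminorm_apply (m := (N, n)) le_rfl le_rfl f x
  exact ne_top_of_le_ne_top (ENNReal.mul_ne_top ENNReal.ofReal_ne_top hN.ne)
    (eLpNorm_le_mul_eLpNorm_of_ae_le_mul (.of_forall hdecay) p)

set_option maxSynthPendingDepth 3 in
theorem exists_sq_eLpNorm_iteratedFDeriv_le [BorelSpace E] [FiniteDimensional ℝ E]
    [μ.IsAddHaarMeasure] (n : ℕ)
    {a b p : ℝ≥0∞} (ha : 1 < a) (hb : 1 < b) (hab : a⁻¹ + b⁻¹ = 2 * p⁻¹) :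
    ∃ C : ℝ≥0, ∀ f : SchwartzMap E V,
      eLpNorm (iteratedFDeriv ℝ (n + 1) f) p μ ^ 2 ≤
        C * (eLpNorm (iteratedFDeriv ℝ n f) a μ * eLpNorm (iteratedFDeriv ℝ (n + 2) f) b μ) := by
  obtain ⟨C, hC⟩ := exists_sq_eLpNorm_fderiv_le (V := E [×n]→L[ℝ] V) (μ := μ) ha hb hab
  refine ⟨C, fun f ↦ ?_⟩
  have hfst : eLpNorm (fderiv ℝ (iteratedFDeriv ℝ n f)) p μ =
      eLpNorm (iteratedFDeriv ℝ (n + 1) f) p μ :=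
    eLpNorm_congr_norm_ae (.of_forall fun _ ↦ norm_fderiv_iteratedFDeriv)
  have hsnd : eLpNorm (fderiv ℝ (fderiv ℝ (iteratedFDeriv ℝ n f))) b μ =
      eLpNorm (iteratedFDeriv ℝ (n + 2) f) b μ :=
    eLpNorm_congr_norm_ae (.of_forall fun _ ↦ norm_fderiv_fderiv_iteratedFDeriv)
  rw [← hfst, ← hsnd]
  exact hC _ ((f.smooth (2 + n)).iteratedFDeriv_right le_rfl)
    (eLpNorm_iteratedFDeriv_ne_top f n a) (hsnd ▸ eLpNorm_iteratedFDeriv_ne_top f (n + 2) b)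

end SchwartzDerivatives

section MixedDerivatives

variable {E F G : Type*} [NormedAddCommGroup E] [NormedSpace ℝ E] [MeasurableSpace E]
  [NormedAddCommGroup F] [NormedSpace ℝ F] [NormedAddCommGroup G] [NormedSpace ℝ G]
  {s t s' t' : ℝ≥0∞} {μ : Measure E}

/-- The bound which Hölder's inequality gives for `∇ⁿg · ∇ᵐh` when the exponents interpolate
between `‖g‖_s ‖∇ᵐ⁺ⁿh‖_{s'}` and `‖∇ᵐ⁺ⁿg‖_t ‖h‖_{t'}`. -/
noncomputable def mixedDerivNorm (μ : Measure E) (s t s' t' : ℝ≥0∞) (g : E → F) (h : E → G)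
    (m n : ℕ) : ℝ≥0∞ :=
  eLpNorm (iteratedFDeriv ℝ n g) (interpolatedExponent s t m n) μ *
    eLpNorm (iteratedFDeriv ℝ m h) (interpolatedExponent s' t' m n) μ

theorem mixedDerivNorm_zero_right {g : E → F} {h : E → G} {m : ℕ} (hm : m ≠ 0) :
    mixedDerivNorm μ s t s' t' g h m 0 = eLpNorm g s μ * eLpNorm (iteratedFDeriv ℝ m h) s' μ := by
  rw [mixedDerivNorm, interpolatedExponent_zero_right hm, interpolatedExponent_zero_right hm,
    eLpNorm_iteratedFDeriv_zero]

theorem mixedDerivNorm_zero_left {g : E → F} {h : E → G} {n : ℕ} (hn : n ≠ 0) :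
    mixedDerivNorm μ s t s' t' g h 0 n = eLpNorm (iteratedFDeriv ℝ n g) t μ * eLpNorm h t' μ := by
  rw [mixedDerivNorm, interpolatedExponent_zero_left hn, interpolatedExponent_zero_left hn,
    eLpNorm_iteratedFDeriv_zero]

theorem mixedDerivNorm_ne_top [μ.HasTemperateGrowth] (g : SchwartzMap E F) (h : SchwartzMap E G)
    (m n : ℕ) : mixedDerivNorm μ s t s' t' g h m n ≠ ⊤ :=
  ENNReal.mul_ne_top (eLpNorm_iteratedFDeriv_ne_top g n _) (eLpNorm_iteratedFDeriv_ne_top h m _)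

variable [BorelSpace E] [FiniteDimensional ℝ E] [μ.IsAddHaarMeasure]

theorem exists_sq_mixedDerivNorm_le (hs : 1 < s) (ht : 1 < t) (hs' : 1 < s') (ht' : 1 < t')
    (m n : ℕ) :
    ∃ C : ℝ≥0, ∀ (g : SchwartzMap E F) (h : SchwartzMap E G),
      mixedDerivNorm μ s t s' t' g h (m + 1) (n + 1) ^ 2 ≤
        C * (mixedDerivNorm μ s t s' t' g h (m + 2) n *
          mixedDerivNorm μ s t s' t' g h m (n + 2)) := by
  have hst (i j : ℕ) : 1 < interpolatedExponent s t i j :=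
    (lt_min hs ht).trans_le min_le_interpolatedExponent
  have hst' (i j : ℕ) : 1 < interpolatedExponent s' t' i j :=
    (lt_min hs' ht').trans_le min_le_interpolatedExponent
  obtain ⟨A, hA⟩ := exists_sq_eLpNorm_iteratedFDeriv_le (V := F) (μ := μ) n
    (hst (m + 2) n) (hst m (n + 2)) inv_interpolatedExponent_add_inv_interpolatedExponent
  obtain ⟨B, hB⟩ := exists_sq_eLpNorm_iteratedFDeriv_le (V := G) (μ := μ) m
    (hst' m (n + 2)) (hst' (m + 2) n)
    ((add_comm _ _).trans inv_interpolatedExponent_add_inv_interpolatedExponent)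
  refine ⟨A * B, fun g h ↦ ?_⟩
  simp only [mixedDerivNorm, mul_pow]
  refine (mul_le_mul' (hA g) (hB h)).trans_eq ?_
  push_cast
  ring

theorem exists_mixedDerivNorm_le (hs : 1 < s) (ht : 1 < t) (hs' : 1 < s') (ht' : 1 < t')
    (k : ℕ) :
    ∃ C : ℝ≥0, ∀ (g : SchwartzMap E F) (h : SchwartzMap E G), ∀ n ≤ k,
      mixedDerivNorm μ s t s' t' g h (k - n) n ≤
        C * max (mixedDerivNorm μ s t s' t' g h k 0) (mixedDerivNorm μ s t s' t' g h 0 k) := by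
  choose C hC using
    exists_sq_mixedDerivNorm_le (F := F) (G := G) (μ := μ) hs ht hs' ht'
  obtain ⟨K, hK, hCK⟩ : ∃ K : ℝ≥0, 1 ≤ K ∧ ∀ j, j + 2 ≤ k → C (k - (j + 2)) j ≤ K :=
    ⟨1 + (Finset.range k).sup fun j ↦ C (k - (j + 2)) j, le_self_add, fun j hj ↦
      le_add_of_le_right (Finset.le_sup (f := fun j ↦ C (k - (j + 2)) j)
        (Finset.mem_range.2 (by lia)))⟩
  refine ⟨K ^ k ^ 2, fun g h n hn ↦ ?_⟩
  set x : ℕ → ℝ≥0∞ := fun j ↦ mixedDerivNorm μ s t s' t' g h (k - j) j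
  have hlogconvex (j : ℕ) (hj : j + 2 ≤ k) : x (j + 1) ^ 2 ≤ K * (x j * x (j + 2)) := by
    calc x (j + 1) ^ 2 ≤ C (k - (j + 2)) j * (x j * x (j + 2)) := by
          simpa only [x, show k - (j + 1) = k - (j + 2) + 1 by lia,
            show k - j = k - (j + 2) + 2 by lia] using hC (k - (j + 2)) j g h
      _ ≤ K * (x j * x (j + 2)) := by
          gcongr
          exact hCK j hj
  simpa [x] using le_pow_mul_max_endpoints_of_sq_le_mul hK
    (fun j ↦ mixedDerivNorm_ne_top g h (k - j) j) hlogconvex hn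

end MixedDerivatives

section Leibniz

theorem exists_eLpNorm_sum_le {α ι V : Type*} [MeasurableSpace α] {μ : Measure α}
    [NormedAddCommGroup V] (p : ℝ≥0∞) (s : Finset ι) :
    ∃ C : ℝ≥0, ∀ f : ι → α → V, (∀ i ∈ s, AEStronglyMeasurable (f i) μ) →
      eLpNorm (∑ i ∈ s, f i) p μ ≤ C * ∑ i ∈ s, eLpNorm (f i) p μ := by
  classical
  induction s using Finset.induction_on with
  | empty => exact ⟨0, fun f _ ↦ by simp⟩
  | insert i s hi ih =>
    obtain ⟨C, hC⟩ := ih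
    lift p.LpAddConst to ℝ≥0 using p.LpAddConst_lt_top.ne with K hK
    refine ⟨K * (1 + C), fun f hf ↦ ?_⟩
    rw [Finset.forall_mem_insert] at hf
    rw [Finset.sum_insert hi, Finset.sum_insert hi]
    calc eLpNorm (f i + ∑ j ∈ s, f j) p μ
        ≤ K * (eLpNorm (f i) p μ + eLpNorm (∑ j ∈ s, f j) p μ) :=
          hK ▸ eLpNorm_add_le' hf.1 (Finset.aestronglyMeasurable_sum _ hf.2) p
      _ ≤ K * ((1 + C) * eLpNorm (f i) p μ + (1 + C) * ∑ j ∈ s, eLpNorm (f j) p μ) := by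
          gcongr
          · exact le_mul_of_one_le_left' le_self_add
          · exact (hC f hf.2).trans (by gcongr; exact le_add_self)
      _ = (K * (1 + C) : ℝ≥0) * (eLpNorm (f i) p μ + ∑ j ∈ s, eLpNorm (f j) p μ) := by
          push_cast
          ring

variable {E F G H : Type*} [NormedAddCommGroup E] [NormedSpace ℝ E] [NormedAddCommGroup F]
  [NormedSpace ℝ F] [NormedAddCommGroup G] [NormedSpace ℝ G] [NormedAddCommGroup H]
  [NormedSpace ℝ H]

theorem norm_iteratedFDeriv_bilinear_le_sum_norm_mul_norm (B : F →L[ℝ] G →L[ℝ] H) {g : E → F}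
    {h : E → G} {k : ℕ} (hg : ContDiff ℝ k g) (hh : ContDiff ℝ k h) (x : E) :
    ‖iteratedFDeriv ℝ k (fun y ↦ B (g y) (h y)) x‖ ≤ ‖B‖ * 2 ^ k *
      ∑ i ∈ Finset.range (k + 1), ‖iteratedFDeriv ℝ i g x‖ * ‖iteratedFDeriv ℝ (k - i) h x‖ := by
  refine (B.norm_iteratedFDeriv_le_of_bilinear hg hh x le_rfl).trans ?_
  rw [mul_assoc, Finset.mul_sum _ _ (2 ^ k)]
  simp only [mul_assoc]
  gcongr with i
  exact_mod_cast Nat.choose_le_two_pow k i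

theorem exists_eLpNorm_iteratedFDeriv_bilinear_le [MeasurableSpace E] [BorelSpace E]
    [SecondCountableTopology E] {μ : Measure E} (B : F →L[ℝ] G →L[ℝ] H) {k : ℕ} {r : ℝ≥0∞}
    {P Q : ℕ → ℝ≥0∞} (hPQ : ∀ i ≤ k, ENNReal.HolderTriple (P i) (Q i) r) :
    ∃ C : ℝ≥0, ∀ (g : E → F) (h : E → G), ContDiff ℝ k g → ContDiff ℝ k h →
      eLpNorm (iteratedFDeriv ℝ k fun x ↦ B (g x) (h x)) r μ ≤
        C * ∑ i ∈ Finset.range (k + 1),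
          eLpNorm (iteratedFDeriv ℝ i g) (P i) μ *
            eLpNorm (iteratedFDeriv ℝ (k - i) h) (Q i) μ := by
  obtain ⟨C, hC⟩ := exists_eLpNorm_sum_le (V := ℝ) (μ := μ) r (Finset.range (k + 1))
  refine ⟨(‖B‖ * 2 ^ k).toNNReal * C, fun g h hg hh ↦ ?_⟩
  set f : ℕ → E → ℝ := fun i x ↦ ‖iteratedFDeriv ℝ i g x‖ * ‖iteratedFDeriv ℝ (k - i) h x‖
  have hg_cont (i : ℕ) (hi : i ≤ k) : Continuous (iteratedFDeriv ℝ i g) :=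
    hg.continuous_iteratedFDeriv (by exact_mod_cast hi)
  have hh_cont (i : ℕ) : Continuous (iteratedFDeriv ℝ (k - i) h) :=
    hh.continuous_iteratedFDeriv (by exact_mod_cast k.sub_le i)
  have hholder (i : ℕ) (hi : i ≤ k) : eLpNorm (f i) r μ ≤
      eLpNorm (iteratedFDeriv ℝ i g) (P i) μ * eLpNorm (iteratedFDeriv ℝ (k - i) h) (Q i) μ := by
    have := hPQ i hi
    simpa using eLpNorm_le_eLpNorm_mul_eLpNorm'_of_norm (p := P i) (q := Q i) (r := r) (μ := μ)
      (hg_cont i hi).aestronglyMeasurable (hh_cont i).aestronglyMeasurable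
      (fun u v ↦ ‖u‖ * ‖v‖) 1 (.of_forall fun x ↦ by simp)
  calc eLpNorm (iteratedFDeriv ℝ k fun x ↦ B (g x) (h x)) r μ
      ≤ (‖B‖ * 2 ^ k).toNNReal * eLpNorm (∑ i ∈ Finset.range (k + 1), f i) r μ := by
        refine eLpNorm_le_mul_eLpNorm_of_ae_le_mul (.of_forall fun x ↦ ?_) r
        refine (norm_iteratedFDeriv_bilinear_le_sum_norm_mul_norm B hg hh x).trans ?_
        gcongr
        simpa [f] using le_abs_self _
    _ ≤ (‖B‖ * 2 ^ k).toNNReal * (C * ∑ i ∈ Finset.range (k + 1), eLpNorm (f i) r μ) := by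
        gcongr
        exact hC f fun i hi ↦ ((hg_cont i (Finset.mem_range_succ_iff.1 hi)).norm.mul
          (hh_cont i).norm).aestronglyMeasurable
    _ ≤ _ := by
        rw [ENNReal.coe_mul, mul_assoc]
        gcongr with i hi
        exact hholder i (Finset.mem_range_succ_iff.1 hi)

end Leibniz

section ProductEstimate

variable {E F G H : Type*} [NormedAddCommGroup E] [NormedSpace ℝ E] [FiniteDimensional ℝ E]
  [MeasurableSpace E] [BorelSpace E] (μ : Measure E) [NormedAddCommGroup F] [NormedSpace ℝ F]
  [NormedAddCommGroup G] [NormedSpace ℝ G] [NormedAddCommGroup H] [NormedSpace ℝ H]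
  (B : F →L[ℝ] G →L[ℝ] H) {r r₁ r₂ r₃ r₄ : ℝ≥0∞}

theorem eLpNorm_iteratedFDeriv_zero_bilinear_le (h12 : r₁⁻¹ + r₂⁻¹ = r⁻¹) {g : E → F} {h : E → G}
    (hg : Continuous g) (hh : Continuous h) :
    eLpNorm (iteratedFDeriv ℝ 0 fun x ↦ B (g x) (h x)) r μ ≤
      ‖B‖₊ * (eLpNorm g r₁ μ * eLpNorm (iteratedFDeriv ℝ 0 h) r₂ μ) := by
  have : ENNReal.HolderTriple r₁ r₂ r := ⟨h12⟩
  rw [eLpNorm_iteratedFDeriv_zero, eLpNorm_iteratedFDeriv_zero, ← mul_assoc]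
  exact eLpNorm_le_eLpNorm_mul_eLpNorm'_of_norm hg.aestronglyMeasurable hh.aestronglyMeasurable
    (B · ·) ‖B‖₊ (.of_forall fun x ↦ B.le_opNorm₂ (g x) (h x))

theorem exists_eLpNorm_iteratedFDeriv_bilinear_le_add [μ.IsAddHaarMeasure] {k : ℕ} (hk : k ≠ 0)
    (hr₁ : 1 < r₁) (hr₂ : 1 < r₂) (hr₃ : 1 < r₃) (hr₄ : 1 < r₄)
    (h12 : r₁⁻¹ + r₂⁻¹ = r⁻¹) (h34 : r₃⁻¹ + r₄⁻¹ = r⁻¹) :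
    ∃ C : ℝ≥0, ∀ (g : SchwartzMap E F) (h : SchwartzMap E G),
      eLpNorm (iteratedFDeriv ℝ k fun x ↦ B (g x) (h x)) r μ ≤
        C * (eLpNorm g r₁ μ * eLpNorm (iteratedFDeriv ℝ k h) r₂ μ +
          eLpNorm h r₃ μ * eLpNorm (iteratedFDeriv ℝ k g) r₄ μ) := by
  obtain ⟨A, hA⟩ := exists_eLpNorm_iteratedFDeriv_bilinear_le (μ := μ) (r := r) B (k := k)
    (P := fun n ↦ interpolatedExponent r₁ r₄ (k - n) n)
    (Q := fun n ↦ interpolatedExponent r₂ r₃ (k - n) n)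
    fun n _ ↦ holderTriple_interpolatedExponent h12 ((add_comm _ _).trans h34) (by lia)
  obtain ⟨D, hD⟩ := exists_mixedDerivNorm_le (F := F) (G := G) (μ := μ) hr₁ hr₄ hr₂ hr₃ k
  refine ⟨A * ((k + 1) * D), fun g h ↦ ?_⟩
  calc eLpNorm (iteratedFDeriv ℝ k fun x ↦ B (g x) (h x)) r μ
      ≤ A * ∑ n ∈ Finset.range (k + 1), mixedDerivNorm μ r₁ r₄ r₂ r₃ g h (k - n) n :=
        hA g h (g.smooth k) (h.smooth k)
    _ ≤ A * ∑ _ ∈ Finset.range (k + 1), D * (mixedDerivNorm μ r₁ r₄ r₂ r₃ g h k 0 +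
          mixedDerivNorm μ r₁ r₄ r₂ r₃ g h 0 k) := by
        gcongr with n hn
        refine (hD g h n (Finset.mem_range_succ_iff.1 hn)).trans ?_
        gcongr
        exact max_le_add_of_nonneg bot_le bot_le
    _ = _ := by
        rw [mixedDerivNorm_zero_right hk, mixedDerivNorm_zero_left hk, Finset.sum_const,
          Finset.card_range, nsmul_eq_mul]
        push_cast
        ring

theorem product_leibniz_estimate_general [μ.IsAddHaarMeasure] (k : ℕ)
    (hr₁ : 1 < r₁) (hr₂ : 1 < r₂) (hr₃ : 1 < r₃) (hr₄ : 1 < r₄)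
    (h12 : 1 / r₁ + 1 / r₂ = 1 / r) (h34 : 1 / r₃ + 1 / r₄ = 1 / r) :
    ∃ C : ℝ≥0, 0 < C ∧ ∀ (g : SchwartzMap E F) (h : SchwartzMap E G),
      eLpNorm (iteratedFDeriv ℝ k fun x ↦ B (g x) (h x)) r μ ≤
        C * eLpNorm g r₁ μ * eLpNorm (iteratedFDeriv ℝ k h) r₂ μ
          + C * eLpNorm h r₃ μ * eLpNorm (iteratedFDeriv ℝ k g) r₄ μ := by
  simp only [one_div] at h12 h34
  obtain ⟨C, hC⟩ : ∃ C : ℝ≥0, ∀ (g : SchwartzMap E F) (h : SchwartzMap E G),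
      eLpNorm (iteratedFDeriv ℝ k fun x ↦ B (g x) (h x)) r μ ≤
        C * (eLpNorm g r₁ μ * eLpNorm (iteratedFDeriv ℝ k h) r₂ μ +
          eLpNorm h r₃ μ * eLpNorm (iteratedFDeriv ℝ k g) r₄ μ) := by
    rcases eq_or_ne k 0 with rfl | hk
    · exact ⟨‖B‖₊, fun g h ↦ (eLpNorm_iteratedFDeriv_zero_bilinear_le μ B h12 g.continuous
        h.continuous).trans (by gcongr; exact le_self_add)⟩
    · exact exists_eLpNorm_iteratedFDeriv_bilinear_le_add μ B hk hr₁ hr₂ hr₃ hr₄ h12 h34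
  refine ⟨C + 1, by positivity, fun g h ↦ (hC g h).trans ?_⟩
  rw [mul_assoc, mul_assoc, ← mul_add]
  gcongr
  exact le_self_add

end ProductEstimate

theorem le_of_one_div_add_one_div_eq {p q r : ℝ≥0∞} (h : 1 / p + 1 / q = 1 / r) : r ≤ p := by
  simp only [one_div] at h
  exact ENNReal.inv_le_inv.1 (h ▸ le_self_add)

/-- Leibniz-type product estimate: for exponents `1 < r, r₂, r₄ < ∞`, `1 ≤ r₁, r₃ ≤ ∞` with
`1/r₁ + 1/r₂ = 1/r₃ + 1/r₄ = 1/r` and every `k ≥ 0`, there is `C > 0` such that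
`‖∇^k(gh)‖_{L^r} ≤ C ‖g‖_{L^{r₁}} ‖∇^k h‖_{L^{r₂}} + C ‖h‖_{L^{r₃}} ‖∇^k g‖_{L^{r₄}}`. -/
theorem product_leibniz_estimate (k : ℕ) (r r₁ r₂ r₃ r₄ : ℝ≥0∞)
    (hr : 1 < r) (hr' : r < ⊤) (hr₂ : 1 < r₂) (hr₂' : r₂ < ⊤)
    (hr₄ : 1 < r₄) (hr₄' : r₄ < ⊤) (hr₁ : 1 ≤ r₁) (hr₃ : 1 ≤ r₃)
    (h12 : 1 / r₁ + 1 / r₂ = 1 / r) (h34 : 1 / r₃ + 1 / r₄ = 1 / r) :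
    ∃ C : ℝ≥0, 0 < C ∧ ∀ g h : SchwartzMap (EuclideanSpace ℝ (Fin 3)) ℝ,
      eLpNorm (iteratedFDeriv ℝ k fun x => g x * h x) r volume ≤
        (C : ℝ≥0∞) * eLpNorm (⇑g) r₁ volume * eLpNorm (iteratedFDeriv ℝ k ⇑h) r₂ volume
          + (C : ℝ≥0∞) * eLpNorm (⇑h) r₃ volume
              * eLpNorm (iteratedFDeriv ℝ k ⇑g) r₄ volume :=
  product_leibniz_estimate_general volume (ContinuousLinearMap.mul ℝ ℝ) k
    (hr.trans_le (le_of_one_div_add_one_div_eq h12)) hr₂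
    (hr.trans_le (le_of_one_div_add_one_div_eq h34)) hr₄ h12 h34
end
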